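/- For every ε with 0 < ε ≤ 1/2 there exists a constant C > 0 such that every (n,d,λ)-graph G with λ > 0 and d/λ ≥ C contains a crown on n vertices with ⌊εn⌋ spikes. -/

import Mathlib

open scoped Classical

/-- An `(n,d,λ)`-graph: a `d`-regular graph on `n` vertices such that all eigenvalues of its
adjacency matrix except the largest one (which equals `d`) are at most `lam` in absolute value. -/
def IsNDLGraph (n : ℕ) (G : SimpleGraph (Fin n)) (d : ℕ) (lam : ℝ) : Prop :=
  G.IsRegularOfDegree d ∧
  ∃ (h : (G.adjMatrix ℝ).IsHermitian) (i₀ : Fin n),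
    h.eigenvalues i₀ = (d : ℝ) ∧ ∀ i, i ≠ i₀ → |h.eigenvalues i| ≤ lam

/-- `G` contains a crown on all of its `n` vertices with `k` spikes: a cycle `c` of `G` together
with a set `M` of `k` edges of `G` forming a matching, edge-disjoint from the cycle, each matching
edge having exactly one vertex in common with the cycle, and every vertex of `G` lying on the
cycle or on a matching edge. -/
def ContainsSpanningCrown (n : ℕ) (G : SimpleGraph (Fin n)) (k : ℕ) : Prop :=
  ∃ (v : Fin n) (c : G.Walk v v) (M : Finset (Sym2 (Fin n))),
    c.IsCycle ∧ M.card = k ∧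
    (∀ e ∈ M, e ∈ G.edgeSet) ∧
    (∀ e ∈ M, ∀ f ∈ M, e ≠ f → ∀ x : Fin n, x ∈ e → x ∉ f) ∧
    (∀ e ∈ M, e ∉ c.edges) ∧
    (∀ e ∈ M, ∃! x : Fin n, x ∈ e ∧ x ∈ c.support) ∧
    (∀ x : Fin n, x ∈ c.support ∨ ∃ e ∈ M, x ∈ e)

/-!
Put `m ≈ λ n / d`. By the expander mixing lemma every two sets of `m` vertices span an edge, and a
set of at most `2 m` vertices, each with many neighbours in a set `T`, expands into `T`.

Colour the vertices at random with three colours. By Hoeffding's inequality and the local lemma (a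
union bound would fail, as `d` may be bounded while `n` grows) some colouring gives every vertex at
least `d / 6` neighbours of each colour. Let `Y` be the smallest colour class. Sets of at most `2 m`
vertices expand by a factor `3` into the complement of `Y`, so the vertices of `Y`, seen as
one-vertex paths, can be extended in the manner of Friedman and Pippenger. When `t` paths are left,
trees of depth about `log (m / t)` grown from their ends have enough leaves to be joined by an edge.
Joining two paths at a time, and deleting the unused tree vertices each time, costs `O(m)` vertices
altogether and leaves one path covering `Y`, which is prolonged and closed to a cycle `C` on
`n - k` vertices.

A small set of vertices has enough neighbours in `Y ⊆ C`. A large set `U` misses fewer than `m`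
vertices of `C`, and these have many neighbours outside `C`, none of them in `U`. Thus Hall's
condition holds for matching the complement of `C` into `C`, and the matching edges are the spikes.
-/

open Finset Matrix MeasureTheory ProbabilityTheory

section Spectral

variable {ι : Type*} [Fintype ι] [DecidableEq ι] {A : Matrix ι ι ℝ}

theorem sum_eigenvectorBasis_dotProduct_mul (hA : A.IsHermitian) (x y : ι → ℝ) :
    ∑ i, (hA.eigenvectorBasis i ⬝ᵥ x) * (hA.eigenvectorBasis i ⬝ᵥ y) = x ⬝ᵥ y := by
  have parseval := hA.eigenvectorBasis.sum_inner_mul_inner (WithLp.toLp 2 x) (WithLp.toLp 2 y)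
  simp only [EuclideanSpace.inner_eq_star_dotProduct, star_trivial] at parseval
  rw [dotProduct_comm x y, ← parseval]
  exact sum_congr rfl fun i _ => by rw [dotProduct_comm (hA.eigenvectorBasis i).ofLp y]

theorem sqrt_dotProduct_self_eq (hA : A.IsHermitian) (x : ι → ℝ) :
    √(x ⬝ᵥ x) = √(∑ i, |hA.eigenvectorBasis i ⬝ᵥ x| ^ 2) := by
  simp only [sq_abs]
  simp only [← sum_eigenvectorBasis_dotProduct_mul hA x x, sq]

theorem eigenvectorBasis_dotProduct_mulVec (hA : A.IsHermitian) (i : ι) (y : ι → ℝ) :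
    hA.eigenvectorBasis i ⬝ᵥ A *ᵥ y = hA.eigenvalues i * (hA.eigenvectorBasis i ⬝ᵥ y) := by
  have symm : Aᵀ = A := by rw [← conjTranspose_eq_transpose_of_trivial, hA.eq]
  rw [dotProduct_mulVec, ← mulVec_transpose, symm, hA.mulVec_eigenvectorBasis, smul_dotProduct,
    smul_eq_mul]

theorem dotProduct_eq_of_mulVec_eq_smul (hA : A.IsHermitian) {i₀ : ι} {c : ℝ} {v : ι → ℝ}
    (hv : A *ᵥ v = c • v) (hc : ∀ i, i ≠ i₀ → hA.eigenvalues i ≠ c) (x : ι → ℝ) :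
    v ⬝ᵥ x = (hA.eigenvectorBasis i₀ ⬝ᵥ v) * (hA.eigenvectorBasis i₀ ⬝ᵥ x) := by
  have orthogonal : ∀ i, i ≠ i₀ → hA.eigenvectorBasis i ⬝ᵥ v = 0 := by
    intro i hi
    have h := eigenvectorBasis_dotProduct_mulVec hA i v
    rw [hv, dotProduct_smul, smul_eq_mul] at h
    exact (mul_eq_mul_right_iff.1 h).resolve_left (hc i hi).symm
  rw [← sum_eigenvectorBasis_dotProduct_mul hA v x]
  exact sum_eq_single i₀ (fun i _ hi => by rw [orthogonal i hi, zero_mul]) (by simp)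

theorem abs_dotProduct_mulVec_sub_le (hA : A.IsHermitian) {i₀ : ι} {lam : ℝ} (hlam : 0 ≤ lam)
    (h : ∀ i, i ≠ i₀ → |hA.eigenvalues i| ≤ lam) (x y : ι → ℝ) :
    |x ⬝ᵥ A *ᵥ y - hA.eigenvalues i₀ *
        ((hA.eigenvectorBasis i₀ ⬝ᵥ x) * (hA.eigenvectorBasis i₀ ⬝ᵥ y))| ≤
      lam * (√(x ⬝ᵥ x) * √(y ⬝ᵥ y)) := by
  set β : ι → ι → ℝ := fun i => hA.eigenvectorBasis i
  have expand : x ⬝ᵥ A *ᵥ y = ∑ i, hA.eigenvalues i * ((β i ⬝ᵥ x) * (β i ⬝ᵥ y)) := by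
    rw [← sum_eigenvectorBasis_dotProduct_mul hA]
    exact sum_congr rfl fun i _ => by rw [eigenvectorBasis_dotProduct_mulVec]; ring
  rw [expand, ← add_sum_erase _ _ (mem_univ i₀), add_sub_cancel_left]
  calc |∑ i ∈ univ.erase i₀, hA.eigenvalues i * ((β i ⬝ᵥ x) * (β i ⬝ᵥ y))|
      ≤ ∑ i ∈ univ.erase i₀, |hA.eigenvalues i * ((β i ⬝ᵥ x) * (β i ⬝ᵥ y))| :=
        abs_sum_le_sum_abs _ _
    _ ≤ ∑ i ∈ univ.erase i₀, lam * (|β i ⬝ᵥ x| * |β i ⬝ᵥ y|) := by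
        refine sum_le_sum fun i hi => ?_
        rw [abs_mul, abs_mul]
        exact mul_le_mul_of_nonneg_right (h i (ne_of_mem_erase hi)) (by positivity)
    _ ≤ ∑ i, lam * (|β i ⬝ᵥ x| * |β i ⬝ᵥ y|) :=
        sum_le_sum_of_subset_of_nonneg (erase_subset _ _) fun _ _ _ => by positivity
    _ = lam * ∑ i, |β i ⬝ᵥ x| * |β i ⬝ᵥ y| := by rw [mul_sum]
    _ ≤ lam * (√(x ⬝ᵥ x) * √(y ⬝ᵥ y)) := by
        rw [sqrt_dotProduct_self_eq hA x, sqrt_dotProduct_self_eq hA y]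
        exact mul_le_mul_of_nonneg_left (Real.sum_mul_le_sqrt_mul_sqrt _ _ _) hlam

end Spectral

section Pseudorandom

variable {V : Type*}

/-- Bijumbledness (Thomason): the number of edges between any two sets of vertices is, up to an
error `β √(|A| |B|)`, what it would be in a random graph of density `p`. -/
def IsBijumbled (G : SimpleGraph V) [DecidableRel G.Adj] (p β : ℝ) : Prop :=
  ∀ A B : Finset V, |(#(G.interedges A B) : ℝ) - p * (#A * #B)| ≤ β * √(#A * #B)

/-- `G` is `m`-joined: there is an edge between any two sets of at least `m` vertices. The two sets
need not be disjoint. -/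
def IsJoined (G : SimpleGraph V) (m : ℕ) : Prop :=
  ∀ A B : Finset V, m ≤ #A → m ≤ #B → ∃ a ∈ A, ∃ b ∈ B, G.Adj a b

/-- The set of all vertices with a neighbour in `U`; it may meet `U`. -/
def nbhd [Fintype V] [DecidableEq V] (G : SimpleGraph V) [DecidableRel G.Adj] (U : Finset V) :
    Finset V :=
  U.biUnion fun u => G.neighborFinset u

variable {G : SimpleGraph V} {p β : ℝ} {m : ℕ}

theorem IsJoined.pos (h : IsJoined G m) : 0 < m := by
  by_contra! hm
  obtain ⟨a, ha, -⟩ := h ∅ ∅ (by simpa using hm) (by simpa using hm)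
  simp at ha

variable [DecidableRel G.Adj]

theorem dotProduct_adjMatrix_mulVec_indicator [Fintype V] [DecidableEq V] (A B : Finset V) :
    (fun v => if v ∈ A then (1 : ℝ) else 0) ⬝ᵥ
      G.adjMatrix ℝ *ᵥ (fun v => if v ∈ B then (1 : ℝ) else 0) = #(G.interedges A B) := by
  simp only [dotProduct, ite_mul, one_mul, zero_mul, sum_ite_mem, univ_inter, mulVec,
    SimpleGraph.adjMatrix_apply, mul_ite, mul_one, mul_zero]
  rw [SimpleGraph.interedges, Rel.interedges, card_filter, sum_product, Nat.cast_sum]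
  exact sum_congr rfl fun a _ => by rw [Nat.cast_sum]; simp

theorem IsNDLGraph.isBijumbled {n d : ℕ} {G : SimpleGraph (Fin n)} {lam : ℝ}
    (h : IsNDLGraph n G d lam) (hlam : 0 ≤ lam) (hd : lam < d) :
    IsBijumbled G (d / n) lam := by
  obtain ⟨hreg, hA, i₀, hi₀, hlam'⟩ := h
  intro A B
  set x : Fin n → ℝ := fun v => if v ∈ A then 1 else 0
  set y : Fin n → ℝ := fun v => if v ∈ B then 1 else 0
  have hone : G.adjMatrix ℝ *ᵥ (1 : Fin n → ℝ) = (d : ℝ) • (1 : Fin n → ℝ) := by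
    ext v
    simp [SimpleGraph.adjMatrix_mulVec_apply, hreg v]
  have hne : ∀ i, i ≠ i₀ → hA.eigenvalues i ≠ d := fun i hi heq =>
    hd.not_ge ((le_abs_self _).trans (heq ▸ hlam' i hi))
  have proj := dotProduct_eq_of_mulVec_eq_smul hA hone hne
  set t := hA.eigenvectorBasis i₀ ⬝ᵥ (1 : Fin n → ℝ)
  have ht : (n : ℝ) = t * t := by simpa using proj 1
  have hx1 : (#A : ℝ) = t * (hA.eigenvectorBasis i₀ ⬝ᵥ x) := by
    rw [← proj x]; simp [x, dotProduct]
  have hy1 : (#B : ℝ) = t * (hA.eigenvectorBasis i₀ ⬝ᵥ y) := by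
    rw [← proj y]; simp [y, dotProduct]
  have hn : (n : ℝ) ≠ 0 := Nat.cast_ne_zero.2 i₀.pos.ne'
  have key := abs_dotProduct_mulVec_sub_le hA hlam hlam' x y
  have main_term : (d : ℝ) / n * (#A * #B) = d *
      ((hA.eigenvectorBasis i₀ ⬝ᵥ x) * (hA.eigenvectorBasis i₀ ⬝ᵥ y)) := by
    rw [hx1, hy1, div_mul_eq_mul_div, div_eq_iff hn, ht]; ring
  rw [dotProduct_adjMatrix_mulVec_indicator, hi₀, ← main_term] at key
  rw [Real.sqrt_mul (Nat.cast_nonneg _)]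
  simpa [x, y, dotProduct] using key

theorem IsBijumbled.isJoined (h : IsBijumbled G p β) (hβ : 0 ≤ β) (hm : β < p * m) :
    IsJoined G m := by
  intro A B hA hB
  by_contra! no_edge
  have hempty : G.interedges A B = ∅ :=
    filter_eq_empty_iff.2 fun e he => no_edge _ (mem_product.1 he).1 _ (mem_product.1 he).2
  have hp : 0 < p := pos_of_mul_pos_left (hβ.trans_lt hm) (Nat.cast_nonneg m)
  have hm0 : (0 : ℝ) < m := pos_of_mul_pos_right (hβ.trans_lt hm) hp.le
  have hA' : (m : ℝ) ≤ #A := by exact_mod_cast hA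
  have hB' : (m : ℝ) ≤ #B := by exact_mod_cast hB
  have hms : (m : ℝ) ≤ √(#A * #B) := Real.le_sqrt_of_sq_le (by nlinarith)
  have hAB := h A B
  rw [hempty, card_empty, Nat.cast_zero, zero_sub, abs_neg, abs_of_nonneg (by positivity)] at hAB
  have hsq : √(#A * #B : ℝ) * √(#A * #B) = #A * #B := Real.mul_self_sqrt (by positivity)
  have : p * √(#A * #B) ≤ β := by
    refine le_of_mul_le_mul_right ?_ (hm0.trans_le hms)
    rwa [mul_assoc, hsq]
  nlinarith

theorem IsBijumbled.density_le (h : IsBijumbled G p β) (v : V) : p ≤ β := by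
  have hv := h {v} {v}
  have no_loop : G.interedges {v} {v} = ∅ := by
    simp [SimpleGraph.interedges, Rel.interedges, filter_singleton]
  rw [no_loop] at hv
  exact (le_abs_self p).trans (by simpa using hv)

theorem IsBijumbled.one_le_of_adj (h : IsBijumbled G p β) {v w : V} (hvw : G.Adj v w) :
    1 ≤ p + β := by
  have hvw' := h {v} {w}
  have one_edge : G.interedges {v} {w} = {(v, w)} := by
    simp [SimpleGraph.interedges, Rel.interedges, filter_singleton, hvw]
  rw [one_edge] at hvw'
  have : |1 - p| ≤ β := by simpa using hvw'
  linarith [le_abs_self (1 - p)]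

variable [Fintype V] [DecidableEq V]

theorem mem_nbhd {U : Finset V} {v : V} : v ∈ nbhd G U ↔ ∃ u ∈ U, G.Adj u v := by
  simp [nbhd]

theorem nbhd_union (A B : Finset V) : nbhd G (A ∪ B) = nbhd G A ∪ nbhd G B :=
  union_biUnion

theorem nbhd_inter_subset (A B : Finset V) : nbhd G (A ∩ B) ⊆ nbhd G A ∩ nbhd G B :=
  subset_inter (biUnion_subset_biUnion_of_subset_left _ inter_subset_left)
    (biUnion_subset_biUnion_of_subset_left _ inter_subset_right)

theorem IsJoined.card_lt_card_nbhd_add (h : IsJoined G m) {U : Finset V} (hU : m ≤ #U) :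
    Fintype.card V < #(nbhd G U) + m := by
  by_contra! hcard
  obtain ⟨a, ha, b, hb, hab⟩ := h U (nbhd G U)ᶜ hU (by rw [card_compl]; omega)
  exact mem_compl.1 hb (mem_nbhd.2 ⟨a, ha, hab⟩)

theorem le_card_interedges_nbhd_inter {U T : Finset V} {k : ℝ}
    (hdeg : ∀ u ∈ U, k ≤ #(G.neighborFinset u ∩ T)) :
    k * #U ≤ #(G.interedges U (nbhd G U ∩ T)) := by
  have count : #(G.interedges U (nbhd G U ∩ T)) = ∑ u ∈ U, #(G.neighborFinset u ∩ T) := by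
    simp only [SimpleGraph.interedges, Rel.interedges, card_filter, sum_product]
    refine sum_congr rfl fun u hu => ?_
    rw [← card_filter]
    congr 1
    ext b
    simp only [mem_filter, mem_inter, mem_nbhd, SimpleGraph.mem_neighborFinset]
    exact ⟨fun hb => ⟨hb.2, hb.1.2⟩, fun hb => ⟨⟨⟨u, hu, hb.1⟩, hb.2⟩, hb.1⟩⟩
  rw [count, mul_comm, ← nsmul_eq_mul, Nat.cast_sum]
  exact card_nsmul_le_sum _ _ _ hdeg

theorem IsBijumbled.mul_card_le_card_nbhd_inter (h : IsBijumbled G p β) (hβ : 0 < β) {D : ℕ}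
    {U T : Finset V} (hU : p * #U ≤ 4 * β)
    (hdeg : ∀ u ∈ U, 5 * D * β ≤ #(G.neighborFinset u ∩ T)) :
    D * #U ≤ #(nbhd G U ∩ T) := by
  by_contra! hsmall
  have edges := le_card_interedges_nbhd_inter hdeg
  have jumbled := (abs_le.1 (h U (nbhd G U ∩ T))).2
  set B := nbhd G U ∩ T
  have hB : (#B : ℝ) < D * #U := by exact_mod_cast hsmall
  have hDU : (0 : ℝ) < D * #U := hB.trans_le' (by positivity)
  have hUD : (#U : ℝ) ≤ D * #U := by
    have : 1 ≤ D := Nat.pos_of_ne_zero (by rintro rfl; simp at hDU)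
    exact_mod_cast Nat.le_mul_of_pos_left _ this
  have hsqrt : √(#U * #B : ℝ) ≤ D * #U :=
    Real.sqrt_le_iff.2 ⟨hDU.le, by nlinarith [Nat.cast_nonneg (α := ℝ) #U]⟩
  have hmain : p * (#U * #B) ≤ 4 * β * #B := by
    rw [← mul_assoc]; exact mul_le_mul_of_nonneg_right hU (by positivity)
  nlinarith [mul_le_mul_of_nonneg_left hsqrt hβ.le, mul_lt_mul_of_pos_left hB hβ]

end Pseudorandom

section Extendable

variable {V : Type*} [Fintype V] [DecidableEq V]

/-- The invariant of Friedman and Pippenger for embedding trees of maximum degree `D` vertex by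
vertex: `W` is the set of occupied vertices, and `B` contains each vertex as often as it has already
been given a neighbour, so that `v` is still entitled to `D - B.count v` neighbours outside `W`. -/
def Extendable (G : SimpleGraph V) [DecidableRel G.Adj] (D m : ℕ) (W : Finset V)
    (B : Multiset V) : Prop :=
  ∀ U : Finset V, #U ≤ 2 * m → D * #U ≤ #(nbhd G U \ W) + ∑ u ∈ U, B.count u

/-- The sets of fewer than `m` vertices for which the inequality in `Extendable` has no slack. -/
def IsTight (G : SimpleGraph V) [DecidableRel G.Adj] (D m : ℕ) (W : Finset V) (B : Multiset V)
    (U : Finset V) : Prop :=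
  #U < m ∧ #(nbhd G U \ W) + ∑ u ∈ U, B.count u ≤ D * #U

variable {G : SimpleGraph V} [DecidableRel G.Adj] {D m : ℕ} {W : Finset V} {B : Multiset V}

theorem Extendable.mono (h : Extendable G D m W B) {B' : Multiset V} (hB : B ≤ B') :
    Extendable G D m W B' := fun U hU =>
  (h U hU).trans (Nat.add_le_add_left (sum_le_sum fun u _ => Multiset.count_le_of_le u hB) _)

theorem Extendable.mul_card_le_card_nbhd_sdiff {k : ℕ} (h : Extendable G (D + k) m W B)
    (hB : ∀ v, B.count v ≤ k) {U : Finset V} (hU : #U ≤ 2 * m) : D * #U ≤ #(nbhd G U \ W) := by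
  linarith [h U hU, sum_le_card_nsmul U _ k fun u _ => hB u, smul_eq_mul #U k]

theorem card_nbhd_sdiff_union_add_inter_le (U₁ U₂ : Finset V) :
    #(nbhd G (U₁ ∪ U₂) \ W) + #(nbhd G (U₁ ∩ U₂) \ W) ≤ #(nbhd G U₁ \ W) + #(nbhd G U₂ \ W) := by
  rw [nbhd_union, union_sdiff_distrib, ← card_union_add_card_inter (nbhd G U₁ \ W)]
  gcongr
  exact (sdiff_subset_sdiff (nbhd_inter_subset U₁ U₂) subset_rfl).trans inf_sdiff.le

theorem IsJoined.isTight (hJ : IsJoined G m) (room : #W + (2 * D + 1) * m ≤ Fintype.card V)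
    {U : Finset V} (hU : #U ≤ 2 * m) (htight : #(nbhd G U \ W) + ∑ u ∈ U, B.count u ≤ D * #U) :
    IsTight G D m W B U := by
  refine ⟨?_, htight⟩
  by_contra! hlarge
  have hnbhd := hJ.card_lt_card_nbhd_add hlarge
  have hsdiff := le_card_sdiff W (nbhd G U)
  have hDU : D * #U ≤ D * (2 * m) := Nat.mul_le_mul_left D hU
  have hN := Nat.sub_le_iff_le_add.1 hsdiff
  linarith [Nat.zero_le (∑ u ∈ U, B.count u)]

theorem Extendable.isTight_union (h : Extendable G D m W B) (hJ : IsJoined G m)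
    (room : #W + (2 * D + 1) * m ≤ Fintype.card V) {U₁ U₂ : Finset V}
    (h₁ : IsTight G D m W B U₁) (h₂ : IsTight G D m W B U₂) : IsTight G D m W B (U₁ ∪ U₂) := by
  have hunion : #(U₁ ∪ U₂) ≤ 2 * m := (card_union_le _ _).trans (by linarith [h₁.1, h₂.1])
  have hinter := h (U₁ ∩ U₂) ((card_le_card inter_subset_union).trans hunion)
  refine hJ.isTight room hunion ?_
  have submodular := card_nbhd_sdiff_union_add_inter_le (G := G) (W := W) U₁ U₂
  have count_modular := sum_union_inter (s₁ := U₁) (s₂ := U₂) (f := fun u => B.count u)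
  have card_modular := congrArg (D * ·) (card_union_add_card_inter U₁ U₂)
  simp only [mul_add] at card_modular
  linarith [h₁.2, h₂.2]

theorem Extendable.isTight_sup (h : Extendable G D m W B) (hJ : IsJoined G m)
    (room : #W + (2 * D + 1) * m ≤ Fintype.card V) (S : Finset V) (T : V → Finset V)
    (hT : ∀ y ∈ S, IsTight G D m W B (T y)) : IsTight G D m W B (S.sup T) :=
  sup_induction ⟨by simpa using hJ.pos, by simp [nbhd]⟩
    (fun _ h₁ _ h₂ => h.isTight_union hJ room h₁ h₂) hT

theorem Extendable.exists_isTight_of_not_insert (h : Extendable G D m W B) (hJ : IsJoined G m)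
    (room : #W + (2 * D + 1) * m ≤ Fintype.card V) {s y : V}
    (hy : ¬ Extendable G D m (insert y W) (s ::ₘ B)) :
    ∃ U, IsTight G D m W B U ∧ s ∉ U ∧ y ∈ nbhd G U := by
  simp only [Extendable, not_forall, not_le] at hy
  obtain ⟨U, hU, hfail⟩ := hy
  have hext := h U hU
  rw [sdiff_insert] at hfail
  have hcard := pred_card_le_card_erase (s := nbhd G U \ W) (a := y)
  have count_cons : ∑ u ∈ U, (s ::ₘ B).count u = ∑ u ∈ U, B.count u + if s ∈ U then 1 else 0 := by
    simp [Multiset.count_cons, sum_add_distrib]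
  refine ⟨U, hJ.isTight room hU (by omega), fun hs => ?_, ?_⟩
  · simp only [hs, if_true] at count_cons
    omega
  · by_contra hyU
    rw [erase_eq_of_notMem fun hmem => hyU (mem_sdiff.1 hmem).1] at hfail
    omega

theorem Extendable.exists_insert (h : Extendable G D m W B) (hJ : IsJoined G m) {s : V}
    (hs : B.count s < D) (room : #W + (2 * D + 1) * m ≤ Fintype.card V) :
    ∃ y, G.Adj s y ∧ y ∉ W ∧ Extendable G D m (insert y W) (s ::ₘ B) := by
  by_contra! stuck
  have obstruction : ∀ y ∈ nbhd G {s} \ W, ∃ U, IsTight G D m W B U ∧ s ∉ U ∧ y ∈ nbhd G U := by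
    intro y hy
    have hsy : G.Adj s y ∧ y ∉ W := by simpa [mem_nbhd] using hy
    exact h.exists_isTight_of_not_insert hJ room (stuck y hsy.1 hsy.2)
  choose! T hT hsT hyT using obstruction
  set U := (nbhd G {s} \ W).sup T
  have hU : IsTight G D m W B U := h.isTight_sup hJ room _ T hT
  have hsU : s ∉ U := by
    rw [mem_sup]
    rintro ⟨y, hy, hsy⟩
    exact hsT y hy hsy
  have absorbed : nbhd G (insert s U) \ W ⊆ nbhd G U \ W := by
    intro y hy
    rw [insert_eq, nbhd_union, union_sdiff_distrib, mem_union] at hy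
    refine hy.elim (fun hys => ?_) id
    obtain ⟨u, hu, huy⟩ := mem_nbhd.1 (hyT y hys)
    exact mem_sdiff.2 ⟨mem_nbhd.2 ⟨u, mem_sup.2 ⟨y, hys, hu⟩, huy⟩, (mem_sdiff.1 hys).2⟩
  have hext := h (insert s U) (by rw [card_insert_of_notMem hsU]; linarith [hU.1])
  rw [card_insert_of_notMem hsU, sum_insert hsU, mul_add, mul_one] at hext
  linarith [hU.2, card_le_card absorbed]

theorem Extendable.exists_children (h : Extendable G D m W B) (hJ : IsJoined G m)
    (R : Multiset V) (hR : ∀ r ∈ R, (B + R).count r ≤ D)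
    (room : #W + R.card + (2 * D + 1) * m ≤ Fintype.card V) :
    ∃ (X : Finset V) (parent : V → V), X.val.map parent = R ∧ (∀ x ∈ X, G.Adj (parent x) x) ∧
      Disjoint X W ∧ Extendable G D m (W ∪ X) (B + R) := by
  induction R using Multiset.induction with
  | empty => exact ⟨∅, id, by simpa using h⟩
  | cons r R ih =>
    rw [Multiset.card_cons] at room
    obtain ⟨X, parent, hmap, hadj, hdisj, hext⟩ := ih
      (fun v hv => (Multiset.count_le_of_le v (add_le_add_right (R.le_cons_self r) B)).trans
        (hR v (by simp [hv]))) (by omega)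
    have hX : #X = R.card := by rw [← hmap, Multiset.card_map, card_val]
    have hr : (B + R).count r < D := by
      have := hR r (by simp)
      rw [Multiset.add_cons, Multiset.count_cons_self] at this
      omega
    obtain ⟨y, hry, hy, hext'⟩ := hext.exists_insert hJ hr
      (by have := card_union_le W X; omega)
    have hyW : y ∉ W := fun hyW => hy (mem_union_left X hyW)
    have hyX : y ∉ X := fun hyX => hy (mem_union_right W hyX)
    have hne : ∀ x ∈ X, x ≠ y := fun x hx hxy => hyX (hxy ▸ hx)
    refine ⟨insert y X, Function.update parent y r, ?_, ?_, ?_, ?_⟩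
    · rw [insert_val_of_notMem hyX, Multiset.map_cons, Function.update_self, ← hmap]
      exact congrArg _ (Multiset.map_congr rfl fun x hx => Function.update_of_ne (hne x hx) _ _)
    · refine forall_mem_insert _ _ _ |>.2 ⟨by rwa [Function.update_self], fun x hx => ?_⟩
      rw [Function.update_of_ne (hne x hx)]
      exact hadj x hx
    · exact disjoint_insert_left.2 ⟨hyW, hdisj⟩
    · rwa [union_insert, Multiset.add_cons]

omit [Fintype V] in
theorem sum_count_map (X U : Finset V) (f : V → V) :
    ∑ u ∈ U, (X.val.map f).count u = #{x ∈ X | f x ∈ U} := by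
  have hmaps : Set.MapsTo f ({x ∈ X | f x ∈ U} : Finset V) U := fun x hx => (mem_filter.1 hx).2
  rw [card_eq_sum_card_fiberwise hmaps]
  refine sum_congr rfl fun u hu => ?_
  rw [Multiset.count_map, filter_filter]
  change #{x ∈ X | u = f x} = _
  congr 1
  ext x
  aesop

theorem Extendable.of_union_children {X : Finset V} {parent : V → V}
    (h : Extendable G D m (W ∪ X) (B + X.val.map parent)) (hadj : ∀ x ∈ X, G.Adj (parent x) x)
    (hdisj : Disjoint X W) : Extendable G D m W B := by
  intro U hU
  have hext := h U hU
  set Z := X.filter fun x => parent x ∈ U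
  have children : nbhd G U \ (W ∪ X) ∪ Z ⊆ nbhd G U \ W := by
    intro v hv
    rcases mem_union.1 hv with hv | hv
    · exact sdiff_subset_sdiff subset_rfl subset_union_left hv
    · obtain ⟨hvX, hvU⟩ := mem_filter.1 hv
      exact mem_sdiff.2 ⟨mem_nbhd.2 ⟨_, hvU, hadj v hvX⟩, disjoint_left.1 hdisj hvX⟩
  have hdisjZ : Disjoint (nbhd G U \ (W ∪ X)) Z :=
    disjoint_of_subset_right ((filter_subset _ _).trans subset_union_right) sdiff_disjoint
  have hcard := card_le_card children
  rw [card_union_of_disjoint hdisjZ] at hcard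
  simp only [Multiset.count_add, sum_add_distrib, sum_count_map] at hext
  linarith

/-- `Q` lists the interior vertices of a path from `a` to `b` that can be added to the occupied set
`W` without destroying extendability. -/
structure IsLink (G : SimpleGraph V) [DecidableRel G.Adj] (D m : ℕ) (W : Finset V) (B : Multiset V)
    (a b : V) (Q : List V) : Prop where
  nodup : Q.Nodup
  notMem : ∀ q ∈ Q, q ∉ W
  isChain : (a :: (Q ++ [b])).IsChain G.Adj
  extendable : Extendable G D m (W ∪ Q.toFinset) (B + 2 • (Q : Multiset V) + {a, b})

omit [Fintype V] in
theorem val_eq_pair_add_sdiff {X : Finset V} {x y : V} (hx : x ∈ X) (hy : y ∈ X) (hxy : x ≠ y) :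
    X.val = {x, y} + (X \ {x, y}).val := by
  have hpair : ({x, y} : Finset V).val = {x, y} := insert_val_of_notMem (by simpa using hxy)
  rw [sdiff_val, hpair, ← hpair]
  exact (add_tsub_cancel_of_le (val_le_iff.2 (by simp [insert_subset_iff, hx, hy]))).symm

omit [Fintype V] [DecidableEq V] in
theorem coe_cons_append_singleton (x y : V) (Q : List V) :
    ((x :: (Q ++ [y]) : List V) : Multiset V) = {x, y} + (Q : Multiset V) := by
  rw [← Multiset.cons_coe, ← Multiset.coe_add, add_comm (Q : Multiset V)]
  rfl

theorem IsLink.of_children {X : Finset V} {parent : V → V} {x y : V} {Q : List V}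
    (hQ : IsLink G D m (W ∪ X) (B + X.val.map parent) x y Q)
    (hadj : ∀ x ∈ X, G.Adj (parent x) x) (hdisj : Disjoint X W)
    (hx : x ∈ X) (hy : y ∈ X) (hxy : x ≠ y) :
    IsLink G D m W B (parent x) (parent y) (x :: (Q ++ [y])) := by
  have hQX : ∀ q ∈ Q, q ∉ X := fun q hq hqX => hQ.notMem q hq (mem_union_right W hqX)
  have hmem : ∀ {q}, q ∈ x :: (Q ++ [y]) → q ∈ X ∧ (q = x ∨ q = y) ∨ q ∈ Q := by
    intro q hq
    rw [← Multiset.mem_coe, coe_cons_append_singleton] at hq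
    rcases (by simpa [or_assoc] using hq : q = x ∨ q = y ∨ q ∈ Q) with rfl | rfl | hq <;> simp [*]
  refine ⟨?_, fun q hq => ?_, ?_, ?_⟩
  · rw [← Multiset.coe_nodup, coe_cons_append_singleton, Multiset.nodup_add]
    refine ⟨by simpa using hxy, hQ.nodup, ?_⟩
    simpa [Multiset.disjoint_left] using ⟨fun h => hQX x h hx, fun h => hQX y h hy⟩
  · exact (hmem hq).elim (fun h => disjoint_left.1 hdisj h.1)
      fun hq hqW => hQ.notMem q hq (mem_union_left X hqW)
  · refine List.isChain_cons_cons.2 ⟨hadj x hx, ?_⟩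
    refine List.isChain_append (l₁ := x :: (Q ++ [y])) |>.2 ⟨hQ.isChain, by simp, ?_⟩
    simpa only [← List.cons_append, List.getLast?_concat, List.head?_cons, Option.mem_some_iff,
      forall_eq'] using (hadj y hy).symm
  · refine Extendable.of_union_children (X := X \ {x, y}) (parent := parent) ?_
      (fun z hz => hadj z (sdiff_subset hz)) ?_
    · have hset : W ∪ X ∪ Q.toFinset = W ∪ (x :: (Q ++ [y])).toFinset ∪ X \ {x, y} := by
        ext z
        simp only [mem_union, mem_sdiff, List.mem_toFinset, List.mem_cons, List.mem_append,
          mem_insert, mem_singleton]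
        grind
      rw [← hset, coe_cons_append_singleton]
      refine hQ.extendable.mono (le_iff_exists_add.2 ⟨{x, y}, ?_⟩)
      rw [val_eq_pair_add_sdiff hx hy hxy, Multiset.map_add]
      simp only [Multiset.insert_eq_cons, Multiset.map_cons, Multiset.map_singleton]
      abel
    · rw [disjoint_union_right]
      refine ⟨disjoint_of_subset_left sdiff_subset hdisj, disjoint_left.2 fun z hz hzQ => ?_⟩
      obtain ⟨hzX, hzxy⟩ := mem_sdiff.1 hz
      exact (hmem (List.mem_toFinset.1 hzQ)).elim (fun h => hzxy (by simpa using h.2))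
        fun hq => hQX z hq hzX

theorem Extendable.exists_two_children (h : Extendable G D m W B) (hJ : IsJoined G m)
    {R : Finset V} (hR : ∀ r ∈ R, B.count r + 2 ≤ D)
    (room : #W + 2 * #R + (2 * D + 1) * m ≤ Fintype.card V) :
    ∃ (X : Finset V) (parent : V → V), (∀ x ∈ X, parent x ∈ R) ∧
      (∀ x ∈ X, G.Adj (parent x) x) ∧ Disjoint X W ∧
      Extendable G D m (W ∪ X) (B + X.val.map parent) ∧
      ∀ S ⊆ R, #{x ∈ X | parent x ∈ S} = 2 * #S := by
  have count_R : ∀ r ∈ R, (2 • R.val).count r = 2 := fun r hr => by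
    rw [Multiset.count_nsmul, Multiset.count_eq_one_of_mem R.nodup hr]
  obtain ⟨X, parent, hmap, hadj, hdisj, hext⟩ := h.exists_children hJ (2 • R.val)
    (fun r hr => by
      have hr' : r ∈ R := Multiset.mem_of_mem_nsmul hr
      rw [Multiset.count_add, count_R r hr']
      exact hR r hr')
    (by rwa [Multiset.card_nsmul, card_val])
  refine ⟨X, parent, fun x hx =>
    Multiset.mem_of_mem_nsmul (hmap ▸ Multiset.mem_map_of_mem parent hx), hadj, hdisj,
    hmap ▸ hext, fun S hS => ?_⟩
  rw [← sum_count_map, hmap, sum_congr rfl fun r hr => count_R r (hS hr), sum_const, smul_eq_mul,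
    mul_comm]

theorem Extendable.exists_isLink (hJ : IsJoined G m) (h : ℕ) :
    ∀ {W : Finset V} {B : Multiset V} {R₁ R₂ : Finset V}, Extendable G D m W B →
      (∀ v ∈ B, v ∈ W) → R₁ ∪ R₂ ⊆ W → Disjoint R₁ R₂ →
      (∀ r ∈ R₁ ∪ R₂, B.count r + 2 ≤ D) → m ≤ 2 ^ h * #R₁ → m ≤ 2 ^ h * #R₂ →
      #W + 2 ^ (h + 1) * #(R₁ ∪ R₂) + (2 * D + 1) * m ≤ Fintype.card V + 2 * #(R₁ ∪ R₂) →
      ∃ a ∈ R₁, ∃ b ∈ R₂, ∃ Q : List V, Q.length = 2 * h ∧ IsLink G D m W B a b Q := by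
  induction h with
  | zero =>
    intro W B R₁ R₂ hext _ _ _ _ hm₁ hm₂ _
    obtain ⟨a, ha, b, hb, hab⟩ := hJ R₁ R₂ (by simpa using hm₁) (by simpa using hm₂)
    refine ⟨a, ha, b, hb, [], rfl, List.nodup_nil, by simp, by simpa using hab, ?_⟩
    simpa using hext.mono (Multiset.le_add_right B {a, b})
  | succ h ih =>
    intro W B R₁ R₂ hext hB hR hdisj hcount hm₁ hm₂ room
    rw [pow_succ] at room hm₁ hm₂
    have hpow : 2 ≤ 2 ^ (h + 1) := Nat.le_self_pow (by omega) 2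
    obtain ⟨X, parent, hparent, hadj, hXW, hext', hfibre⟩ :=
      hext.exists_two_children hJ hcount (by nlinarith)
    have hB' : ∀ v ∈ B + X.val.map parent, v ∈ W := fun v hv =>
      (Multiset.mem_add.1 hv).elim (hB v) fun hv => by
        obtain ⟨x, hx, rfl⟩ := Multiset.mem_map.1 hv
        exact hR (hparent x hx)
    have hcount' : ∀ x ∈ X, (B + X.val.map parent).count x + 2 ≤ D := fun x hx => by
      rw [Multiset.count_eq_zero.2 fun hxB => disjoint_left.1 hXW hx (hB' x hxB)]
      have := hcount _ (hparent x hx)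
      omega
    set X₁ : Finset V := {x ∈ X | parent x ∈ R₁}
    set X₂ : Finset V := {x ∈ X | parent x ∈ R₂}
    have hX : X₁ ∪ X₂ = X := by
      rw [← filter_or, filter_true_of_mem fun x hx => mem_union.1 (hparent x hx)]
    have hXcard : #X = 2 * #(R₁ ∪ R₂) := by
      rw [← hfibre _ subset_rfl, filter_true_of_mem hparent]
    obtain ⟨x, hx, y, hy, Q, hQ, hlink⟩ := ih (R₁ := X₁) (R₂ := X₂) hext'
      (fun v hv => mem_union_left X (hB' v hv)) (hX ▸ subset_union_right)
      (disjoint_filter.2 fun x _ h => disjoint_left.1 hdisj h) (hX ▸ hcount')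
      (by rw [hfibre R₁ subset_union_left]; linarith)
      (by rw [hfibre R₂ subset_union_right]; linarith)
      (by rw [hX, card_union_of_disjoint hXW.symm, hXcard]; linarith)
    rw [mem_filter] at hx hy
    refine ⟨parent x, hx.2, parent y, hy.2, x :: (Q ++ [y]),
      by rw [List.length_cons, List.length_append, List.length_singleton]; omega,
      hlink.of_children hadj hXW hx.1 hy.1 ?_⟩
    rintro rfl
    exact disjoint_left.1 hdisj hx.2 hy.2

end Extendable

section LinearForest

variable {V : Type*}

/-- The degrees of the vertices of the path `l`, as multiplicities: each vertex is counted once for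
its predecessor and once for its successor. -/
def pathDegrees (l : List V) : Multiset V :=
  (l.tail : Multiset V) + (l.dropLast : Multiset V)

/-- The vertices of a linear forest, given as the multiset of its paths. -/
def forestVerts (S : Multiset (List V)) : Multiset V :=
  S.bind fun l => (l : Multiset V)

/-- The degrees of the vertices of a linear forest, as multiplicities. -/
def forestDegrees (S : Multiset (List V)) : Multiset V :=
  S.bind pathDegrees

variable {S : Multiset (List V)} {l l₁ l₂ : List V}

theorem forestVerts_singleton (l : List V) : forestVerts {l} = l :=
  Multiset.singleton_bind ..

theorem forestDegrees_singleton (l : List V) : forestDegrees {l} = pathDegrees l :=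
  Multiset.singleton_bind ..

theorem forestVerts_cons : forestVerts (l ::ₘ S) = l + forestVerts S :=
  Multiset.cons_bind ..

theorem forestDegrees_cons : forestDegrees (l ::ₘ S) = pathDegrees l + forestDegrees S :=
  Multiset.cons_bind ..

theorem exists_add_eq_of_le_card {α : Type*} {s : Multiset α} {k : ℕ} (hk : k ≤ s.card) :
    ∃ t u, t + u = s ∧ t.card = k := by
  refine ⟨s.toList.take k, s.toList.drop k, ?_, by simpa using hk⟩
  rw [Multiset.coe_add, List.take_append_drop, Multiset.coe_toList]

theorem isChain_join {R : V → V → Prop} (h₁ : l₁ ≠ []) (h₂ : l₂ ≠ []) {Q : List V}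
    (chain₁ : l₁.IsChain R) (chain₂ : l₂.IsChain R)
    (chainQ : (l₁.getLast h₁ :: (Q ++ [l₂.head h₂])).IsChain R) :
    (l₁ ++ (Q ++ l₂)).IsChain R := by
  have split₁ : l₁ ++ (Q ++ l₂) = l₁.dropLast ++ l₁.getLast h₁ :: (Q ++ l₂) := by
    conv_lhs => rw [← List.dropLast_append_getLast h₁]
    simp
  have split₂ : l₁.getLast h₁ :: (Q ++ l₂) =
      (l₁.getLast h₁ :: Q) ++ l₂.head h₂ :: l₂.tail := by simp
  rw [split₁, List.isChain_split, List.dropLast_append_getLast, split₂, List.isChain_split,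
    List.cons_head_tail]
  exact ⟨chain₁, chainQ, chain₂⟩

theorem forestVerts_join (l₁ l₂ Q : List V) :
    forestVerts ((l₁ ++ (Q ++ l₂)) ::ₘ S) =
      forestVerts (l₁ ::ₘ l₂ ::ₘ S) + (Q : Multiset V) := by
  simp only [forestVerts_cons, ← Multiset.coe_add]
  abel

theorem coe_eq_dropLast_add_getLast (hl : l ≠ []) :
    (l : Multiset V) = (l.dropLast : Multiset V) + {l.getLast hl} := by
  rw [← Multiset.coe_singleton, Multiset.coe_add, List.dropLast_append_getLast hl]

theorem coe_eq_head_add_tail (hl : l ≠ []) :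
    (l : Multiset V) = {l.head hl} + (l.tail : Multiset V) := by
  rw [← Multiset.coe_singleton, Multiset.coe_add, List.singleton_append, List.cons_head_tail]

theorem pathDegrees_join (h₁ : l₁ ≠ []) (h₂ : l₂ ≠ []) (Q : List V) :
    pathDegrees (l₁ ++ (Q ++ l₂)) =
      pathDegrees l₁ + pathDegrees l₂ + 2 • (Q : Multiset V) + {l₁.getLast h₁, l₂.head h₂} := by
  have hQ : Q ++ l₂ ≠ [] := by simp [h₂]
  rw [pathDegrees, List.tail_append_of_ne_nil h₁, List.dropLast_append_of_ne_nil hQ,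
    List.dropLast_append_of_ne_nil h₂]
  simp only [← Multiset.coe_add]
  rw [coe_eq_head_add_tail h₂, coe_eq_dropLast_add_getLast h₁, pathDegrees, pathDegrees,
    Multiset.insert_eq_cons, ← Multiset.singleton_add]
  abel

theorem pathDegrees_concat_le (hl : l ≠ []) (y : V) :
    l.getLast hl ::ₘ pathDegrees l ≤ pathDegrees (l ++ [y]) := by
  rw [pathDegrees, pathDegrees, List.tail_append_of_ne_nil hl, List.dropLast_concat,
    ← Multiset.coe_add, coe_eq_dropLast_add_getLast hl, ← Multiset.singleton_add]
  exact Multiset.le_iff_exists_add.2 ⟨{y}, by rw [Multiset.coe_singleton]; abel⟩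

theorem pathDegrees_add_ends (hl : l ≠ []) :
    pathDegrees l + {l.getLast hl, l.head hl} = 2 • (l : Multiset V) := by
  rw [two_nsmul]
  nth_rw 2 [coe_eq_head_add_tail hl]
  rw [coe_eq_dropLast_add_getLast hl, pathDegrees, Multiset.insert_eq_cons,
    ← Multiset.singleton_add]
  abel

theorem pathDegrees_le (l : List V) : pathDegrees l ≤ 2 • (l : Multiset V) := by
  rw [two_nsmul]
  exact add_le_add (Multiset.coe_le.2 l.tail_sublist.subperm)
    (Multiset.coe_le.2 l.dropLast_sublist.subperm)

theorem mem_forestVerts_of_mem_forestDegrees {v : V} (hv : v ∈ forestDegrees S) :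
    v ∈ forestVerts S := by
  obtain ⟨l, hl, hvl⟩ := Multiset.mem_bind.1 hv
  exact Multiset.mem_bind.2 ⟨l, hl,
    Multiset.mem_of_mem_nsmul (Multiset.mem_of_le (pathDegrees_le l) hvl)⟩

theorem map_le_forestVerts (S : Multiset (List V)) {φ : List V → V} (hφ : ∀ l ∈ S, φ l ∈ l) :
    S.map φ ≤ forestVerts S := by
  induction S using Multiset.induction with
  | empty => exact Multiset.zero_le _
  | cons l S ih =>
    rw [Multiset.map_cons, forestVerts_cons, ← Multiset.singleton_add]
    exact add_le_add (Multiset.singleton_le.2 (hφ l (Multiset.mem_cons_self l S)))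
      (ih fun l' hl' => hφ l' (Multiset.mem_cons_of_mem hl'))

theorem count_forestDegrees_le_one [DecidableEq V] (hS : (forestVerts S).Nodup) {v : V}
    (hl : l ∈ S) (hne : l ≠ []) (hv : v = l.getLast hne ∨ v = l.head hne) :
    (forestDegrees S).count v ≤ 1 := by
  obtain ⟨S, rfl⟩ := Multiset.exists_cons_of_mem hl
  rw [forestVerts_cons, Multiset.nodup_add] at hS
  obtain ⟨hlnodup, -, hdisj⟩ := hS
  have hvmem : v ∈ l := by
    rcases hv with rfl | rfl
    exacts [List.getLast_mem hne, List.head_mem hne]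
  have hcount : ((l : Multiset V)).count v = 1 := Multiset.count_eq_one_of_mem hlnodup hvmem
  have other : (forestDegrees S).count v = 0 := Multiset.count_eq_zero.2 fun h =>
    Multiset.disjoint_left.1 hdisj hvmem (mem_forestVerts_of_mem_forestDegrees h)
  have ends := congrArg (Multiset.count v) (pathDegrees_add_ends hne)
  have hpair : 1 ≤ ({l.getLast hne, l.head hne} : Multiset V).count v :=
    Multiset.one_le_count_iff_mem.2 (by simpa using hv)
  rw [Multiset.count_add, Multiset.count_nsmul, hcount] at ends
  rw [forestDegrees_cons, Multiset.count_add, other]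
  omega

variable [Fintype V] [DecidableEq V] {G : SimpleGraph V} [DecidableRel G.Adj] {m : ℕ}

/-- A spanned linear forest whose paths can still be extended at their endpoints: each vertex is
allowed three neighbours, two along its path and one to spare. -/
structure IsExtendableForest (G : SimpleGraph V) [DecidableRel G.Adj] (m : ℕ)
    (S : Multiset (List V)) : Prop where
  nodup : (forestVerts S).Nodup
  ne_nil : ∀ l ∈ S, l ≠ []
  isChain : ∀ l ∈ S, l.IsChain G.Adj
  extendable : Extendable G 3 m (forestVerts S).toFinset (forestDegrees S)

theorem IsExtendableForest.join (hS : IsExtendableForest G m (l₁ ::ₘ l₂ ::ₘ S)) (h₁ : l₁ ≠ [])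
    (h₂ : l₂ ≠ []) {Q : List V}
    (hQ : IsLink G 3 m (forestVerts (l₁ ::ₘ l₂ ::ₘ S)).toFinset (forestDegrees (l₁ ::ₘ l₂ ::ₘ S))
      (l₁.getLast h₁) (l₂.head h₂) Q) :
    IsExtendableForest G m ((l₁ ++ (Q ++ l₂)) ::ₘ S) := by
  have degrees_join : forestDegrees ((l₁ ++ (Q ++ l₂)) ::ₘ S) =
      forestDegrees (l₁ ::ₘ l₂ ::ₘ S) + 2 • (Q : Multiset V) +
        {l₁.getLast h₁, l₂.head h₂} := by
    simp only [forestDegrees_cons, pathDegrees_join h₁ h₂]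
    abel
  refine ⟨?_, ?_, ?_, ?_⟩
  · rw [forestVerts_join, Multiset.nodup_add]
    exact ⟨hS.nodup, hQ.nodup, Multiset.disjoint_right.2 fun hq hqS =>
      hQ.notMem _ hq (Multiset.mem_toFinset.2 hqS)⟩
  · intro l hl
    rcases Multiset.mem_cons.1 hl with rfl | hl
    · simp [h₁]
    · exact hS.ne_nil l (by simp [hl])
  · intro l hl
    rcases Multiset.mem_cons.1 hl with rfl | hl
    · exact isChain_join h₁ h₂ (hS.isChain l₁ (by simp)) (hS.isChain l₂ (by simp)) hQ.isChain
    · exact hS.isChain l (by simp [hl])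
  · rw [forestVerts_join, degrees_join, Multiset.toFinset_add]
    exact hQ.extendable

theorem IsExtendableForest.card_toFinset (hS : IsExtendableForest G m S) :
    #(forestVerts S).toFinset = (forestVerts S).card :=
  Multiset.toFinset_card_of_nodup hS.nodup

omit [Fintype V] [DecidableEq V] in
theorem exists_map_getLast_add_map_head_le_forestVerts [Nonempty V] {A C : Multiset (List V)}
    (hA : ∀ l ∈ A, l ≠ []) (hC : ∀ l ∈ C, l ≠ []) :
    ∃ last head : List V → V, (∀ l, ∀ hl : l ≠ [], last l = l.getLast hl) ∧
      (∀ l, ∀ hl : l ≠ [], head l = l.head hl) ∧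
      A.map last + C.map head ≤ forestVerts (A + C) := by
  obtain ⟨v₀⟩ := ‹Nonempty V›
  have last_eq : ∀ l, ∀ hl : l ≠ [], l.getLast?.getD v₀ = l.getLast hl := fun l hl => by
    simp [List.getLast?_eq_some_getLast hl]
  have head_eq : ∀ l, ∀ hl : l ≠ [], l.head?.getD v₀ = l.head hl := fun l hl => by
    simp [List.head?_eq_some_head hl]
  refine ⟨_, _, last_eq, head_eq, ?_⟩
  rw [forestVerts, Multiset.add_bind]
  exact add_le_add
    (map_le_forestVerts A fun l hl => last_eq l (hA l hl) ▸ List.getLast_mem _)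
    (map_le_forestVerts C fun l hl => head_eq l (hC l hl) ▸ List.head_mem _)

theorem IsExtendableForest.exists_isLink {A C : Multiset (List V)}
    (hS : IsExtendableForest G m (A + C)) (hJ : IsJoined G m) {h : ℕ} (hA : m ≤ 2 ^ h * A.card)
    (hC : m ≤ 2 ^ h * C.card)
    (room : (forestVerts (A + C)).card + 2 ^ (h + 1) * (A + C).card + 7 * m ≤
      Fintype.card V + 2 * (A + C).card) :
    ∃ l₁ ∈ A, ∃ l₂ ∈ C, ∃ (h₁ : l₁ ≠ []) (h₂ : l₂ ≠ []) (Q : List V), Q.length = 2 * h ∧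
      IsLink G 3 m (forestVerts (A + C)).toFinset (forestDegrees (A + C))
        (l₁.getLast h₁) (l₂.head h₂) Q := by
  have hA0 : A ≠ 0 := by rintro rfl; simpa using hJ.pos.trans_le hA
  obtain ⟨l, hl⟩ := Multiset.exists_mem_of_ne_zero hA0
  have : Nonempty V := ⟨l.head (hS.ne_nil l (Multiset.mem_add.2 (.inl hl)))⟩
  have neA : ∀ l ∈ A, l ≠ [] := fun l hl => hS.ne_nil l (Multiset.mem_add.2 (.inl hl))
  have neC : ∀ l ∈ C, l ≠ [] := fun l hl => hS.ne_nil l (Multiset.mem_add.2 (.inr hl))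
  obtain ⟨last, head, last_eq, head_eq, ends_le⟩ :=
    exists_map_getLast_add_map_head_le_forestVerts neA neC
  obtain ⟨nodupA, nodupC, hdisj⟩ := Multiset.nodup_add.1 (Multiset.nodup_of_le ends_le hS.nodup)
  have ends_card : #((A.map last).toFinset ∪ (C.map head).toFinset) = (A + C).card := by
    rw [← Multiset.toFinset_add, Multiset.toFinset_card_of_nodup
      (Multiset.nodup_of_le ends_le hS.nodup), Multiset.card_add, Multiset.card_map,
      Multiset.card_map, Multiset.card_add]
  obtain ⟨a, ha, b, hb, Q, hQlen, hQ⟩ := hS.extendable.exists_isLink hJ h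
    (R₁ := (A.map last).toFinset) (R₂ := (C.map head).toFinset)
    (fun v hv => Multiset.mem_toFinset.2 (mem_forestVerts_of_mem_forestDegrees hv))
    (by rw [← Multiset.toFinset_add]
        exact Multiset.toFinset_subset.2 (Multiset.subset_of_le ends_le))
    (Multiset.disjoint_toFinset.2 hdisj)
    (fun v hv => by
      suffices (forestDegrees (A + C)).count v ≤ 1 by omega
      simp only [mem_union, Multiset.mem_toFinset, Multiset.mem_map] at hv
      rcases hv with ⟨l, hl, rfl⟩ | ⟨l, hl, rfl⟩
      · exact count_forestDegrees_le_one hS.nodup (Multiset.mem_add.2 (.inl hl)) (neA l hl)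
          (.inl (last_eq _ _))
      · exact count_forestDegrees_le_one hS.nodup (Multiset.mem_add.2 (.inr hl)) (neC l hl)
          (.inr (head_eq _ _)))
    (by rwa [Multiset.toFinset_card_of_nodup nodupA, Multiset.card_map])
    (by rwa [Multiset.toFinset_card_of_nodup nodupC, Multiset.card_map])
    (by rw [ends_card, hS.card_toFinset]; omega)
  simp only [Multiset.mem_toFinset, Multiset.mem_map] at ha hb
  obtain ⟨⟨l₁, hl₁, rfl⟩, l₂, hl₂, rfl⟩ := ha, hb
  rw [last_eq l₁ (neA l₁ hl₁), head_eq l₂ (neC l₂ hl₂)] at hQ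
  exact ⟨l₁, hl₁, l₂, hl₂, _, _, Q, hQlen, hQ⟩

theorem IsExtendableForest.exists_merge (hS : IsExtendableForest G m S) (hJ : IsJoined G m)
    {h : ℕ} (hm : m ≤ 2 ^ h * (S.card / 2))
    (room : (forestVerts S).card + 2 ^ (h + 1) * S.card + 7 * m ≤
      Fintype.card V + 2 * S.card) :
    ∃ S', IsExtendableForest G m S' ∧ S'.card + 1 = S.card ∧ forestVerts S ≤ forestVerts S' ∧
      (forestVerts S').card = (forestVerts S).card + 2 * h := by
  obtain ⟨A, C, rfl, hA⟩ := exists_add_eq_of_le_card (Nat.div_le_self S.card 2)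
  obtain ⟨l₁, hl₁, l₂, hl₂, h₁, h₂, Q, hQlen, hQ⟩ := hS.exists_isLink hJ (h := h) (by rwa [hA])
    (hm.trans (Nat.mul_le_mul_left _ (by rw [Multiset.card_add] at hA ⊢; omega))) room
  obtain ⟨A, rfl⟩ := Multiset.exists_cons_of_mem hl₁
  obtain ⟨C, rfl⟩ := Multiset.exists_cons_of_mem hl₂
  rw [Multiset.cons_add, Multiset.add_cons] at hS hQ ⊢
  have hverts : forestVerts ((l₁ ++ (Q ++ l₂)) ::ₘ (A + C)) =
      forestVerts (l₁ ::ₘ l₂ ::ₘ (A + C)) + (Q : Multiset V) := forestVerts_join l₁ l₂ Q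
  refine ⟨_, hS.join h₁ h₂ hQ, by simp, hverts ▸ Multiset.le_add_right _ _, ?_⟩
  rw [hverts, Multiset.card_add, Multiset.coe_card, hQlen]

theorem IsExtendableForest.concat (hl : IsExtendableForest G m {l}) (hJ : IsJoined G m)
    (room : l.length + 7 * m ≤ Fintype.card V) : ∃ y, IsExtendableForest G m {l ++ [y]} := by
  have hne : l ≠ [] := hl.ne_nil l (Multiset.mem_singleton_self l)
  have hlast : (forestDegrees {l}).count (l.getLast hne) < 3 :=
    (count_forestDegrees_le_one hl.nodup (Multiset.mem_singleton_self l) hne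
      (.inl rfl)).trans_lt (by norm_num)
  obtain ⟨y, hadj, hy, hext⟩ := hl.extendable.exists_insert hJ hlast
    (by rwa [hl.card_toFinset, forestVerts_singleton, Multiset.coe_card])
  have hverts : forestVerts {l ++ [y]} = y ::ₘ forestVerts {l} := by
    rw [forestVerts_singleton, forestVerts_singleton, ← Multiset.coe_add, add_comm]
    rfl
  refine ⟨y, ?_, by simp, fun l' hl' => ?_, ?_⟩
  · rw [hverts, Multiset.nodup_cons]
    exact ⟨fun h => hy (Multiset.mem_toFinset.2 h), hl.nodup⟩
  · rw [Multiset.mem_singleton.1 hl', List.isChain_append]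
    refine ⟨hl.isChain l (Multiset.mem_singleton_self l), List.isChain_singleton y, ?_⟩
    simpa [List.getLast?_eq_some_getLast hne] using hadj
  · rw [hverts, Multiset.toFinset_cons]
    refine hext.mono ?_
    rw [forestDegrees_singleton, forestDegrees_singleton]
    exact pathDegrees_concat_le hne y

/-- The least `h` such that a tree of depth `h` grown from each of half of `t` vertices has at
least `m` leaves in total. -/
def linkDepth (m t : ℕ) : ℕ :=
  Nat.clog 2 (m ⌈/⌉ (t / 2))

theorem lt_linkDepth_iff {m t i : ℕ} (ht : 2 ≤ t) : i < linkDepth m t ↔ 2 ^ i * (t / 2) < m := by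
  rw [linkDepth, Nat.lt_clog_iff_pow_lt one_lt_two, ← not_le,
    ceilDiv_le_iff_le_mul (Nat.div_pos ht two_pos), not_le, mul_comm]

theorem le_two_pow_linkDepth_mul {m t : ℕ} (ht : 2 ≤ t) : m ≤ 2 ^ linkDepth m t * (t / 2) :=
  not_lt.1 ((lt_linkDepth_iff ht).not.1 (lt_irrefl _))

theorem two_pow_linkDepth_succ_mul_le {m t : ℕ} (ht : 2 ≤ t) :
    2 ^ (linkDepth m t + 1) * t ≤ 12 * m + 2 * t := by
  rcases hi : linkDepth m t with _ | i
  · omega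
  · have hlt : 2 ^ i * (t / 2) < m := (lt_linkDepth_iff ht).1 (hi ▸ i.lt_succ_self)
    calc 2 ^ (i + 1 + 1) * t ≤ 2 ^ (i + 1 + 1) * (3 * (t / 2)) := by gcongr; omega
      _ = 12 * (2 ^ i * (t / 2)) := by ring
      _ ≤ 12 * m + 2 * t := by omega

theorem card_filter_two_pow_mul_half_lt_le (m t i : ℕ) :
    #{s ∈ Icc 2 t | 2 ^ i * (s / 2) < m} ≤ 2 * ((m - 1) / 2 ^ i) := by
  have hsub : {s ∈ Icc 2 t | 2 ^ i * (s / 2) < m} ⊆ Icc 2 (2 * ((m - 1) / 2 ^ i) + 1) := by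
    intro s hs
    obtain ⟨hs, hlt⟩ := mem_filter.1 hs
    have hhalf : s / 2 ≤ (m - 1) / 2 ^ i :=
      (Nat.le_div_iff_mul_le (by positivity)).2 (by rw [mul_comm]; omega)
    rw [mem_Icc] at hs ⊢
    omega
  exact (card_le_card hsub).trans (by simp)

theorem sum_linkDepth_le (m t : ℕ) : ∑ s ∈ Icc 2 t, linkDepth m s ≤ 4 * m := by
  have hcount : ∀ s ∈ Icc 2 t, linkDepth m s = #{i ∈ range m | 2 ^ i * (s / 2) < m} := by
    intro s hs
    have hs := (mem_Icc.1 hs).1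
    rw [← card_range (linkDepth m s)]
    congr 1
    ext i
    rw [mem_range, mem_filter, mem_range, lt_linkDepth_iff hs]
    refine ⟨fun h => ⟨?_, h⟩, And.right⟩
    calc i < 2 ^ i := Nat.lt_two_pow_self
      _ ≤ 2 ^ i * (s / 2) := Nat.le_mul_of_pos_right _ (Nat.div_pos hs two_pos)
      _ < m := h
  calc ∑ s ∈ Icc 2 t, linkDepth m s
      = ∑ s ∈ Icc 2 t, #{i ∈ range m | 2 ^ i * (s / 2) < m} := sum_congr rfl hcount
    _ = ∑ i ∈ range m, #{s ∈ Icc 2 t | 2 ^ i * (s / 2) < m} := by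
        simp only [card_filter]
        exact sum_comm
    _ ≤ ∑ i ∈ range m, 2 * ((m - 1) / 2 ^ i) :=
        sum_le_sum fun i _ => card_filter_two_pow_mul_half_lt_le m t i
    _ ≤ 4 * m := by
        rw [← mul_sum]
        have := Nat.geom_sum_le le_rfl (m - 1) m
        omega

theorem IsExtendableForest.exists_singleton (hS : IsExtendableForest G m S) (hJ : IsJoined G m)
    (hne : S ≠ 0)
    (room : (forestVerts S).card + 2 * ∑ s ∈ Icc 2 S.card, linkDepth m s + 19 * m ≤
      Fintype.card V) :
    ∃ l, IsExtendableForest G m {l} ∧ forestVerts S ≤ l ∧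
      l.length = (forestVerts S).card + 2 * ∑ s ∈ Icc 2 S.card, linkDepth m s := by
  obtain ⟨t, ht⟩ := Nat.exists_eq_add_one_of_ne_zero (Multiset.card_eq_zero.not.2 hne)
  rw [ht] at room ⊢
  clear hne
  induction t generalizing S with
  | zero =>
    obtain ⟨l, rfl⟩ := Multiset.card_eq_one.1 ht
    exact ⟨l, hS, (forestVerts_singleton l).le, by simp [forestVerts_singleton]⟩
  | succ t ih =>
    have hdepth := two_pow_linkDepth_succ_mul_le (m := m) (t := t + 1 + 1) (by omega)
    rw [sum_Icc_succ_top (by omega)] at room ⊢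
    obtain ⟨S', hS', hcard', hle, hlen⟩ := hS.exists_merge hJ (h := linkDepth m (t + 1 + 1))
      (by rw [ht]; exact le_two_pow_linkDepth_mul (by omega)) (by rw [ht]; omega)
    obtain ⟨l, hl, hSl, hllen⟩ := ih hS' (by omega) (by omega)
    exact ⟨l, hl, hle.trans hSl, by omega⟩

theorem IsExtendableForest.exists_prefix (hJ : IsJoined G m) (hl : IsExtendableForest G m {l})
    {k : ℕ} (hk : l.length ≤ k) (room : k + 7 * m ≤ Fintype.card V) :
    ∃ l', IsExtendableForest G m {l'} ∧ l <+: l' ∧ l'.length = k := by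
  induction k, hk using Nat.le_induction with
  | base => exact ⟨l, hl, List.prefix_rfl, rfl⟩
  | succ k hk ih =>
    obtain ⟨l', hl', hpre, rfl⟩ := ih (by omega)
    obtain ⟨y, hy⟩ := hl'.concat hJ (by omega)
    exact ⟨_, hy, hpre.trans (List.prefix_append ..), by simp⟩

omit [Fintype V] [DecidableEq V] in
theorem getLast_ne_head_of_nodup (hl : l.Nodup) (hlen : 2 ≤ l.length) (hne : l ≠ []) :
    l.getLast hne ≠ l.head hne := by
  obtain ⟨a, l, rfl⟩ := List.exists_cons_of_ne_nil hne
  have hl' : l ≠ [] := List.ne_nil_of_length_pos (Nat.lt_of_succ_lt_succ hlen)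
  rw [List.getLast_cons hl', List.head_cons]
  exact fun h => (List.nodup_cons.1 hl).1 (h ▸ List.getLast_mem hl')

theorem IsExtendableForest.exists_closed (hl : IsExtendableForest G m {l}) (hJ : IsJoined G m)
    (hne : l ≠ []) (hlen : 2 ≤ l.length) (room : l.length + 19 * m ≤ Fintype.card V) :
    ∃ Q : List V, Q.length = 2 * linkDepth m 2 ∧ (l ++ Q).Nodup ∧
      (l ++ (Q ++ [l.head hne])).IsChain G.Adj ∧
      ∀ U : Finset V, #U ≤ 2 * m → #U ≤ #(nbhd G U \ (l ++ Q).toFinset) := by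
  obtain ⟨hnodup, -, hchain, hext⟩ := hl
  rw [forestVerts_singleton] at hnodup
  have hends := getLast_ne_head_of_nodup (Multiset.coe_nodup.1 hnodup) hlen hne
  have hdepth := two_pow_linkDepth_succ_mul_le (m := m) le_rfl
  obtain ⟨a, ha, b, hb, Q, hQlen, hQ⟩ := hext.exists_isLink hJ (linkDepth m 2)
    (R₁ := {l.getLast hne}) (R₂ := {l.head hne})
    (fun v hv => Multiset.mem_toFinset.2 (mem_forestVerts_of_mem_forestDegrees hv))
    (by simp [insert_subset_iff, forestVerts_singleton])
    (disjoint_singleton.2 hends)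
    (fun v hv => Nat.succ_le_succ (Nat.succ_le_succ (count_forestDegrees_le_one
      (forestVerts_singleton l ▸ hnodup) (Multiset.mem_singleton_self l) hne (by simpa using hv))))
    (le_two_pow_linkDepth_mul le_rfl) (le_two_pow_linkDepth_mul le_rfl)
    (by
      rw [singleton_union, card_pair hends, forestVerts_singleton,
        Multiset.toFinset_card_of_nodup hnodup, Multiset.coe_card]
      omega)
  rw [mem_singleton] at ha hb
  subst ha hb
  rw [forestVerts_singleton, forestDegrees_singleton] at hQ
  have hnodupQ : (l ++ Q).Nodup :=
    hnodup.append hQ.nodup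
      (List.disjoint_right.2 fun q hq hql => hQ.notMem q hq (by simpa using hql))
  refine ⟨Q, hQlen, hnodupQ, ?_, fun U hU => ?_⟩
  · exact isChain_join hne (List.cons_ne_nil _ _) (hchain l (Multiset.mem_singleton_self l))
      (List.isChain_singleton _) hQ.isChain
  · have hdegrees : pathDegrees l + 2 • (Q : Multiset V) + {l.getLast hne, l.head hne} =
        2 • ((l ++ Q : List V) : Multiset V) := by
      rw [← Multiset.coe_add, nsmul_add, ← pathDegrees_add_ends hne]
      abel
    have hcount : ∀ u, (2 • ((l ++ Q : List V) : Multiset V)).count u ≤ 2 := fun u => by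
      rw [Multiset.count_nsmul, Multiset.coe_count]
      exact Nat.mul_le_mul_left 2 (List.nodup_iff_count_le_one.1 hnodupQ u)
    have hQext := hQ.extendable
    rw [hdegrees, List.toFinset_coe, ← List.toFinset_append] at hQext
    simpa using hQext.mul_card_le_card_nbhd_sdiff (D := 1) hcount hU

omit [Fintype V] [DecidableEq V] [DecidableRel G.Adj] in
theorem exists_isCycle_of_isChain {a : V} (hnodup : (a :: l).Nodup) (hlen : 2 ≤ l.length)
    (hchain : (a :: (l ++ [a])).IsChain G.Adj) :
    ∃ c : G.Walk a a, c.IsCycle ∧ c.support = a :: (l ++ [a]) := by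
  let c : G.Walk a a := (SimpleGraph.Walk.ofSupport _ (by simp) hchain).copy rfl (by simp)
  have hc : c.support = a :: (l ++ [a]) :=
    (SimpleGraph.Walk.support_copy ..).trans (SimpleGraph.Walk.support_ofSupport ..)
  have hclen : c.length = l.length + 1 := by simpa [hc] using c.length_support.symm
  refine ⟨c, SimpleGraph.Walk.isCycle_iff_isPath_tail_and_le_length.2 ⟨?_, by omega⟩, hc⟩
  rw [SimpleGraph.Walk.isPath_def, SimpleGraph.Walk.support_tail_of_not_nil, hc, List.tail_cons]
  · exact (List.perm_append_singleton a l).nodup_iff.2 hnodup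
  · rw [← SimpleGraph.Walk.length_eq_zero_iff]
    omega

omit [Fintype V] [DecidableEq V] in
theorem forestVerts_map_singleton (Y : Finset V) :
    forestVerts (Y.val.map fun y => [y]) = Y.val := by
  rw [forestVerts, Multiset.bind_map]
  exact (Multiset.bind_singleton ..).trans (Multiset.map_id' _)

theorem isExtendableForest_map_singleton {Y : Finset V}
    (hY : ∀ U : Finset V, #U ≤ 2 * m → 3 * #U ≤ #(nbhd G U \ Y)) :
    IsExtendableForest G m (Y.val.map fun y => [y]) := by
  have hdegrees : forestDegrees (Y.val.map fun y => [y]) = 0 := by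
    simp [forestDegrees, pathDegrees, Multiset.bind_map]
  refine ⟨by rw [forestVerts_map_singleton]; exact Y.nodup, by simp, by simp, fun U hU => ?_⟩
  simpa [forestVerts_map_singleton, hdegrees] using hY U hU

theorem IsJoined.exists_isCycle (hJ : IsJoined G m) {Y : Finset V} (hYne : Y.Nonempty)
    (hY : ∀ U : Finset V, #U ≤ 2 * m → 3 * #U ≤ #(nbhd G U \ Y)) {k : ℕ}
    (hk : #Y + 16 * m ≤ k) (room : k + 19 * m ≤ Fintype.card V) :
    ∃ (v : V) (c : G.Walk v v), c.IsCycle ∧ #c.support.toFinset = k ∧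
      Y ⊆ c.support.toFinset ∧
      ∀ U : Finset V, #U ≤ 2 * m → #U ≤ #(nbhd G U \ c.support.toFinset) := by
  have hm := hJ.pos
  have hlink : linkDepth m 2 ≤ 4 * m := by simpa using sum_linkDepth_le m 2
  have hlinks := sum_linkDepth_le m #Y
  obtain ⟨l, hl, hYl, hllen⟩ := (isExtendableForest_map_singleton hY).exists_singleton hJ
    (by simpa using hYne.ne_empty)
    (by rw [forestVerts_map_singleton, Multiset.card_map, card_val]; omega)
  rw [forestVerts_map_singleton] at hYl hllen
  rw [Multiset.card_map, card_val] at hllen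
  obtain ⟨l, hl, hpre, hllen⟩ := hl.exists_prefix hJ (k := k - 2 * linkDepth m 2)
    (by omega) (by omega)
  have hne : l ≠ [] := hl.ne_nil l (Multiset.mem_singleton_self l)
  obtain ⟨Q, hQlen, hnodup, hchain, hexp⟩ := hl.exists_closed hJ hne (by omega) (by omega)
  obtain ⟨a, l, rfl⟩ := List.exists_cons_of_ne_nil hne
  rw [List.length_cons] at hllen
  obtain ⟨c, hc, hsupp⟩ := exists_isCycle_of_isChain (a := a) (l := l ++ Q) hnodup
    (by rw [List.length_append]; omega) (by simpa using hchain)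
  have hverts : c.support.toFinset = (a :: l ++ Q).toFinset := by
    rw [hsupp]
    ext v
    simp
  refine ⟨a, c, hc, ?_, ?_, ?_⟩
  · rw [hverts, List.toFinset_card_of_nodup hnodup]
    rw [List.length_append, List.length_cons]
    omega
  · intro y hy
    rw [hverts, List.mem_toFinset]
    exact List.mem_append_left Q (hpre.subset (Multiset.mem_of_le hYl hy))
  · simpa only [hverts] using hexp

end LinearForest

section Crown

variable {V : Type*} [Fintype V] [DecidableEq V] {G : SimpleGraph V} [DecidableRel G.Adj] {m : ℕ}
  {C : Finset V}

theorem IsJoined.card_le_card_nbhd_inter (hJ : IsJoined G m)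
    (hin : ∀ U : Finset V, #U ≤ 2 * m → #U ≤ #(nbhd G U ∩ C))
    (hout : ∀ U : Finset V, #U ≤ 2 * m → #U ≤ #(nbhd G U \ C))
    (hC : Fintype.card V ≤ 2 * #C) {U : Finset V} (hU : Disjoint U C) : #U ≤ #(nbhd G U ∩ C) := by
  by_cases hsmall : #U ≤ 2 * m
  · exact hin U hsmall
  set T := C \ nbhd G U
  have hT : #T < m := by
    by_contra! hlarge
    obtain ⟨u, hu, t, ht, hut⟩ := hJ U T (by omega) hlarge
    exact (mem_sdiff.1 ht).2 (mem_nbhd.2 ⟨u, hu, hut⟩)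
  have hTout := hout T (by omega)
  have hdisj : Disjoint U (nbhd G T \ C) := disjoint_right.2 fun v hv hvU => by
    obtain ⟨t, ht, htv⟩ := mem_nbhd.1 (mem_sdiff.1 hv).1
    exact (mem_sdiff.1 ht).2 (mem_nbhd.2 ⟨v, hvU, htv.symm⟩)
  have hcompl : U ∪ nbhd G T \ C ⊆ Cᶜ :=
    union_subset (subset_compl_iff_disjoint_right.2 hU)
      fun v hv => mem_compl.2 (mem_sdiff.1 hv).2
  have hcard := card_le_card hcompl
  rw [card_union_of_disjoint hdisj, card_compl] at hcard
  have hsplit : #T + #(nbhd G U ∩ C) = #C := by rw [inter_comm, card_sdiff_add_card_inter]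
  omega

theorem IsJoined.exists_matching (hJ : IsJoined G m)
    (hin : ∀ U : Finset V, #U ≤ 2 * m → #U ≤ #(nbhd G U ∩ C))
    (hout : ∀ U : Finset V, #U ≤ 2 * m → #U ≤ #(nbhd G U \ C))
    (hC : Fintype.card V ≤ 2 * #C) :
    ∃ f : {v // v ∉ C} → V, f.Injective ∧ ∀ v, f v ∈ C ∧ G.Adj v (f v) := by
  have hall : ∀ S : Finset {v // v ∉ C}, #S ≤ #(S.biUnion fun v => G.neighborFinset v ∩ C) := by
    intro S
    have hdisj : Disjoint (S.map (Function.Embedding.subtype _)) C := by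
      simpa [disjoint_left] using fun _ hv _ => hv
    have hnbhd := hJ.card_le_card_nbhd_inter hin hout hC hdisj
    rwa [card_map, nbhd, map_eq_image, image_biUnion, biUnion_inter] at hnbhd
  obtain ⟨f, hf, hfmem⟩ := (all_card_le_biUnion_card_iff_exists_injective _).1 hall
  refine ⟨f, hf, fun v => ?_⟩
  have hv := mem_inter.1 (hfmem v)
  exact ⟨hv.2, (G.mem_neighborFinset _ _).1 hv.1⟩

theorem containsSpanningCrown_of_isCycle {n k : ℕ} {G : SimpleGraph (Fin n)} {a : Fin n}
    {c : G.Walk a a} (hc : c.IsCycle) (hk : #c.support.toFinset + k = n)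
    {f : {v // v ∉ c.support.toFinset} → Fin n} (hf : f.Injective)
    (hfC : ∀ v, f v ∈ c.support.toFinset ∧ G.Adj v (f v)) : ContainsSpanningCrown n G k := by
  have hmem : ∀ v, f v ∈ c.support := fun v => List.mem_toFinset.1 (hfC v).1
  have hnotMem : ∀ v : {v // v ∉ c.support.toFinset}, (v : Fin n) ∉ c.support :=
    fun v hv => v.2 (List.mem_toFinset.2 hv)
  let spike : {v // v ∉ c.support.toFinset} → Sym2 (Fin n) := fun v => s(v, f v)
  have eq_of_mem : ∀ {x v w}, x ∈ spike v → x ∈ spike w → v = w := by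
    intro x v w hv hw
    rcases Sym2.mem_iff.1 hv with rfl | rfl <;> rcases Sym2.mem_iff.1 hw with h | h
    · exact Subtype.ext h
    · exact absurd (h ▸ hmem w) (hnotMem v)
    · exact absurd (h ▸ hmem v) (hnotMem w)
    · exact hf h
  have hspike : spike.Injective := fun v w hvw =>
    eq_of_mem (Sym2.mem_mk_left _ _) (hvw ▸ Sym2.mem_mk_left _ _)
  refine ⟨a, c, univ.image spike, hc, ?_, ?_⟩
  · rw [card_image_of_injective _ hspike, card_univ, Fintype.card_subtype_compl, Fintype.card_coe,
      Fintype.card_fin]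
    omega
  simp only [mem_image, mem_univ, true_and, forall_exists_index, forall_apply_eq_imp_iff]
  refine ⟨fun v => (hfC v).2, fun v w hvw x hv hw => hvw (congrArg spike (eq_of_mem hv hw)),
    fun v hv => hnotMem v (c.fst_mem_support_of_mem_edges hv), fun v => ?_, fun x => ?_⟩
  · refine ⟨f v, ⟨Sym2.mem_mk_right _ _, hmem v⟩, fun y ⟨hy, hyc⟩ => ?_⟩
    exact (Sym2.mem_iff.1 hy).resolve_left fun h => hnotMem v (h ▸ hyc)
  · by_cases hx : x ∈ c.support
    · exact .inl hx
    · exact .inr ⟨_, ⟨⟨x, by simpa using hx⟩, rfl⟩, Sym2.mem_mk_left _ _⟩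

theorem IsJoined.containsSpanningCrown {n k : ℕ} {G : SimpleGraph (Fin n)} [DecidableRel G.Adj]
    (hJ : IsJoined G m) {Y : Finset (Fin n)} (hYcard : 3 * #Y ≤ n)
    (hin : ∀ U : Finset (Fin n), #U ≤ 2 * m → #U ≤ #(nbhd G U ∩ Y))
    (hout : ∀ U : Finset (Fin n), #U ≤ 2 * m → 3 * #U ≤ #(nbhd G U \ Y))
    (hm : 100 * m ≤ n) (hmk : 19 * m ≤ k) (hk : 2 * k ≤ n) : ContainsSpanningCrown n G k := by
  have hm0 : 0 < m := hJ.pos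
  have hYne : Y.Nonempty :=
    (card_pos.1 (hin {⟨0, by omega⟩} (by rw [card_singleton]; omega))).mono inter_subset_right
  obtain ⟨a, c, hc, hcard, hYc, hexp⟩ := hJ.exists_isCycle hYne hout (k := n - k) (by omega)
    (by rw [Fintype.card_fin]; omega)
  obtain ⟨f, hf, hfC⟩ := hJ.exists_matching (C := c.support.toFinset)
    (fun U hU => (hin U hU).trans (card_le_card (inter_subset_inter_left hYc))) hexp
    (by rw [Fintype.card_fin]; omega)
  exact containsSpanningCrown_of_isCycle hc (by omega) hf hfC

end Crown

section LocalLemma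

variable {Ω ι : Type*} [MeasurableSpace Ω] {μ : Measure Ω} [IsProbabilityMeasure μ]
  {A : ι → Set Ω} {Γ : ι → Finset ι} {p : ℝ} {D : ℕ}

/-- The event that none of the events `A j` with `j ∈ S` occurs. -/
def avoid (A : ι → Set Ω) (S : Finset ι) : Set Ω :=
  ⋂ j ∈ S, (A j)ᶜ

omit [MeasurableSpace Ω] in
theorem avoid_antitone (A : ι → Set Ω) : Antitone (avoid A) := fun _ _ h =>
  Set.biInter_subset_biInter_left h

omit [IsProbabilityMeasure μ] in
theorem measureReal_avoid_le_add_sum [IsFiniteMeasure μ] (S T : Finset ι) :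
    μ.real (avoid A S) ≤ μ.real (avoid A (S ∪ T)) + ∑ j ∈ T, μ.real (A j ∩ avoid A S) := by
  have hcover : avoid A S ⊆ avoid A (S ∪ T) ∪ ⋃ j ∈ T, A j ∩ avoid A S := by
    intro ω hω
    by_cases h : ∃ j ∈ T, ω ∈ A j
    · obtain ⟨j, hj, hωj⟩ := h
      exact .inr (Set.mem_biUnion hj ⟨hωj, hω⟩)
    · push Not at h
      refine .inl (Set.mem_iInter₂.2 fun j hj => ?_)
      exact (mem_union.1 hj).elim (Set.mem_iInter₂.1 hω j) (h j)
  calc μ.real (avoid A S) ≤ _ := measureReal_mono hcover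
    _ ≤ _ := measureReal_union_le _ _
    _ ≤ _ := by gcongr; exact measureReal_biUnion_finset_le _ _

theorem measureReal_inter_avoid_le
    (hind : ∀ i S, Disjoint S (Γ i) → IndepSet (A i) (avoid A S) μ)
    (hp : ∀ i, μ.real (A i) ≤ p) (hΓ : ∀ i, #(Γ i) ≤ D) (hpD : 4 * (p * D) ≤ 1) (i : ι)
    (S : Finset ι) : μ.real (A i ∩ avoid A S) ≤ 2 * p * μ.real (avoid A S) := by
  induction S using Finset.strongInduction generalizing i with
  | H S ih =>
    have hp0 : 0 ≤ p := measureReal_nonneg.trans (hp i)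
    set S₁ := S ∩ Γ i
    set S₂ := S \ Γ i
    have hS : S₂ ∪ S₁ = S := sdiff_union_inter S (Γ i)
    have far : μ.real (A i ∩ avoid A S₂) ≤ p * μ.real (avoid A S₂) := by
      rw [measureReal_def, (hind i S₂ sdiff_disjoint).measure_inter_eq_mul, ENNReal.toReal_mul]
      exact mul_le_mul_of_nonneg_right (hp i) ENNReal.toReal_nonneg
    have near : ∑ j ∈ S₁, μ.real (A j ∩ avoid A S₂) ≤ μ.real (avoid A S₂) / 2 := by
      calc ∑ j ∈ S₁, μ.real (A j ∩ avoid A S₂) ≤ ∑ j ∈ S₁, 2 * p * μ.real (avoid A S₂) := by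
            refine sum_le_sum fun j hj => ih S₂ (sdiff_subset.ssubset_of_ne fun hSS => ?_) j
            exact (mem_sdiff.1 (hSS.symm ▸ (mem_inter.1 hj).1)).2 (mem_inter.1 hj).2
        _ = #S₁ * (2 * p * μ.real (avoid A S₂)) := by rw [sum_const, nsmul_eq_mul]
        _ ≤ D * (2 * p * μ.real (avoid A S₂)) := by
            gcongr
            exact (card_le_card inter_subset_right).trans (hΓ i)
        _ ≤ μ.real (avoid A S₂) / 2 := by
            have hnonneg : 0 ≤ μ.real (avoid A S₂) := measureReal_nonneg
            linarith [mul_le_mul_of_nonneg_right hpD hnonneg]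
    have hsplit := measureReal_avoid_le_add_sum (μ := μ) (A := A) S₂ S₁
    rw [hS] at hsplit
    calc μ.real (A i ∩ avoid A S) ≤ μ.real (A i ∩ avoid A S₂) :=
          measureReal_mono (Set.inter_subset_inter_right _ (avoid_antitone A sdiff_subset))
      _ ≤ p * μ.real (avoid A S₂) := far
      _ ≤ p * (2 * μ.real (avoid A S)) := by gcongr; linarith
      _ = 2 * p * μ.real (avoid A S) := by ring

theorem measureReal_avoid_pos
    (hind : ∀ i S, Disjoint S (Γ i) → IndepSet (A i) (avoid A S) μ)
    (hp : ∀ i, μ.real (A i) ≤ p) (hΓ : ∀ i, #(Γ i) ≤ D) (hD : 0 < D) (hpD : 4 * (p * D) ≤ 1)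
    (S : Finset ι) : 0 < μ.real (avoid A S) := by
  induction S using Finset.induction_on with
  | empty => simp [avoid]
  | insert i S _ ih =>
    have hp2 : 2 * p < 1 := by
      have hp0 : 0 ≤ p := measureReal_nonneg.trans (hp i)
      have : p ≤ p * D := le_mul_of_one_le_right hp0 (by exact_mod_cast hD)
      linarith
    have hsplit := measureReal_avoid_le_add_sum (μ := μ) (A := A) S {i}
    rw [sum_singleton, union_comm, ← insert_eq] at hsplit
    have hkey := measureReal_inter_avoid_le hind hp hΓ hpD i S
    nlinarith

end LocalLemma

section Coloring

theorem indepSet_pi_of_dependsOn {ι : Type*} [Fintype ι] {α : ι → Type*}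
    [∀ i, MeasurableSpace (α i)] (ν : ∀ i, Measure (α i)) [∀ i, IsProbabilityMeasure (ν i)]
    {A B : Set (∀ i, α i)} {S T : Finset ι} (hST : Disjoint S T) (hA : MeasurableSet A)
    (hB : MeasurableSet B) (hAS : DependsOn (· ∈ A) (S : Set ι))
    (hBT : DependsOn (· ∈ B) (T : Set ι)) : IndepSet A B (Measure.pi ν) := by
  have x₀ : ∀ i, α i := fun i => (ν i).nonempty_of_neZero.some
  have eq_preimage : ∀ {E : Set (∀ i, α i)} {U : Finset ι}, DependsOn (· ∈ E) (U : Set ι) →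
      E = U.restrict ⁻¹' (Function.updateFinset x₀ U ⁻¹' E) := fun {E U} hE => by
    ext x
    exact iff_of_eq (hE fun i hi => by simp [Function.updateFinset, mem_coe.1 hi])
  have hindep : IndepFun S.restrict T.restrict (Measure.pi ν) :=
    (iIndepFun_pi fun i => aemeasurable_id).indepFun_finset S T hST measurable_pi_apply
  rw [eq_preimage hAS, eq_preimage hBT]
  exact (indepFun_iff_indepSet_preimage (measurable_restrict S) (measurable_restrict T)).1 hindep
    _ _ (measurable_updateFinset hA) (measurable_updateFinset hB)

theorem measureReal_pi_card_filter_mem_le {ι α : Type*} [Fintype ι] [MeasurableSpace α]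
    (ν : Measure α) [IsProbabilityMeasure ν] {E : Set α}
    [DecidablePred (· ∈ E)] (hE : MeasurableSet E) (T : Finset ι) :
    (Measure.pi fun _ : ι => ν).real {w | (#{u ∈ T | w u ∈ E} : ℝ) ≤ ν.real E / 2 * #T} ≤
      Real.exp (-(ν.real E ^ 2 * #T / 2)) := by
  rcases T.eq_empty_or_nonempty with rfl | hT
  · simp
  set q := ν.real E
  let f : α → ℝ := fun a => q - E.indicator 1 a
  have hf : Measurable f := (measurable_one.indicator hE).const_sub q
  have hE_int : Integrable (E.indicator (1 : α → ℝ)) ν :=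
    (integrable_indicator_iff hE).2 (integrable_const 1).integrableOn
  have hindep : iIndepFun (fun u (w : ι → α) => f (w u)) (Measure.pi fun _ => ν) :=
    iIndepFun_pi fun _ => hf.aemeasurable
  have hsubG : ∀ u ∈ T, HasSubgaussianMGF (fun w : ι → α => f (w u)) ((‖q - (q - 1)‖₊ / 2) ^ 2)
      (Measure.pi fun _ => ν) := fun u _ => by
    refine hasSubgaussianMGF_of_mem_Icc_of_integral_eq_zero
      (hf.comp (measurable_pi_apply u)).aemeasurable (.of_forall fun w => ?_) ?_
    · by_cases h : w u ∈ E <;> simp [f, h]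
    · rw [integral_comp_eval (μ := fun _ : ι => ν) (i := u) hf.aestronglyMeasurable]
      simp only [f]
      rw [integral_sub (integrable_const q) hE_int]
      simp [q, integral_indicator_one hE]
  have hsum : ∀ w : ι → α, ∑ u ∈ T, f (w u) = q * #T - #{u ∈ T | w u ∈ E} := fun w => by
    simp [f, Set.indicator_apply, mul_comm]
  have hoeffding := HasSubgaussianMGF.measure_sum_ge_le_of_iIndepFun hindep hsubG
    (ε := q / 2 * #T) (by positivity)
  convert hoeffding using 2
  · congr 1
    ext w
    simp only [hsum]
    constructor <;> intro h <;> linarith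
  · have : (0 : ℝ) < #T := by exact_mod_cast hT.card_pos
    simp only [sub_sub_cancel, nnnorm_one, sum_const, nsmul_eq_mul]
    push_cast
    field_simp

variable {V κ : Type*} [Fintype V] [Fintype κ] [DecidableEq κ]

/-- The colourings of the vertices in which `v` has at most half the expected number of neighbours
of some colour. -/
def badColorings (κ : Type*) [Fintype κ] [DecidableEq κ] (G : SimpleGraph V) [DecidableRel G.Adj]
    (v : V) : Set (V → κ) :=
  ⋃ c, {w | (#{u ∈ G.neighborFinset v | w u = c} : ℝ) ≤
    (Fintype.card κ : ℝ)⁻¹ / 2 * #(G.neighborFinset v)}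

variable {G : SimpleGraph V} [DecidableRel G.Adj]

theorem dependsOn_badColorings (v : V) :
    DependsOn (· ∈ badColorings κ G v) (G.neighborFinset v : Set V) := by
  intro w w' hww'
  have hfilter : ∀ c, {u ∈ G.neighborFinset v | w u = c} =
      {u ∈ G.neighborFinset v | w' u = c} := fun c =>
    filter_congr fun u hu => by rw [hww' u hu]
  simp only [badColorings, Set.mem_iUnion, Set.mem_ofPred_eq, hfilter]

theorem dependsOn_avoid_badColorings [DecidableEq V] (S : Finset V) :
    DependsOn (· ∈ avoid (badColorings κ G) S) (nbhd G S : Set V) := by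
  intro w w' hww'
  simp only [avoid, Set.mem_iInter, Set.mem_compl_iff]
  refine propext (forall₂_congr fun v hv => not_congr (iff_of_eq ?_))
  refine dependsOn_badColorings v fun u hu => hww' u ?_
  exact mem_nbhd.2 ⟨v, hv, by simpa using hu⟩

theorem measureReal_badColorings_le [MeasurableSpace κ] [MeasurableSingletonClass κ] [Nonempty κ]
    (v : V) : (Measure.pi fun _ : V => uniformOn (Set.univ : Set κ)).real (badColorings κ G v) ≤
      Fintype.card κ * Real.exp (-((Fintype.card κ : ℝ)⁻¹ ^ 2 * G.degree v / 2)) := by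
  have hunif : ∀ c : κ, (uniformOn (Set.univ : Set κ)).real {c} = (Fintype.card κ : ℝ)⁻¹ :=
    fun c => by simp [measureReal_def, uniformOn_univ]
  calc _ ≤ ∑ c : κ, Real.exp (-((Fintype.card κ : ℝ)⁻¹ ^ 2 * G.degree v / 2)) := by
        refine (measureReal_iUnion_fintype_le _).trans (sum_le_sum fun c _ => ?_)
        simpa only [Set.mem_singleton_iff, hunif, G.card_neighborFinset_eq_degree] using
          measureReal_pi_card_filter_mem_le (uniformOn Set.univ) (measurableSet_singleton c)
            (G.neighborFinset v)
    _ = _ := by rw [sum_const, card_univ, nsmul_eq_mul]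

theorem exists_coloring_lt_card_filter [Nonempty κ] {d : ℕ}
    (hG : G.IsRegularOfDegree d) (hd0 : 0 < d)
    (hd : 4 * (Fintype.card κ * Real.exp (-((Fintype.card κ : ℝ)⁻¹ ^ 2 * d / 2)) * d ^ 2) ≤ 1) :
    ∃ w : V → κ, ∀ v c, (Fintype.card κ : ℝ)⁻¹ / 2 * d < #{u ∈ G.neighborFinset v | w u = c} := by
  let _ : MeasurableSpace κ := ⊤
  let μ : Measure (V → κ) := .pi fun _ => uniformOn Set.univ
  have hΓ : ∀ v, #(nbhd G (G.neighborFinset v)) ≤ d ^ 2 := fun v => by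
    refine (card_biUnion_le_card_mul _ _ d fun u _ => (hG u).le).trans_eq ?_
    rw [G.card_neighborFinset_eq_degree, hG v, sq]
  have hind : ∀ v S, Disjoint S (nbhd G (G.neighborFinset v)) →
      IndepSet (badColorings κ G v) (avoid (badColorings κ G) S) μ := by
    intro v S hS
    refine indepSet_pi_of_dependsOn _ (disjoint_left.2 fun u huv huS => ?_)
      .of_discrete .of_discrete (dependsOn_badColorings v) (dependsOn_avoid_badColorings S)
    obtain ⟨x, hxS, hxu⟩ := mem_nbhd.1 huS
    exact disjoint_left.1 hS hxS (mem_nbhd.2 ⟨u, huv, hxu.symm⟩)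
  have hpos := measureReal_avoid_pos (D := d ^ 2) hind
    (fun v => (measureReal_badColorings_le v).trans_eq (by rw [hG v])) hΓ (by positivity)
    (by exact_mod_cast hd) univ
  obtain ⟨w, hw⟩ := nonempty_of_measureReal_ne_zero hpos.ne'
  refine ⟨w, fun v c => ?_⟩
  by_contra! hle
  refine Set.mem_iInter₂.1 hw v (mem_univ v) (Set.mem_iUnion.2 ⟨c, hle.trans_eq ?_⟩)
  rw [G.card_neighborFinset_eq_degree, hG v]

theorem eventually_four_mul_exp_mul_sq_le_one {k : ℝ} (hk : 0 < k) :
    ∀ᶠ d : ℕ in Filter.atTop, 4 * (k * Real.exp (-(k⁻¹ ^ 2 * d / 2)) * d ^ 2) ≤ 1 := by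
  have hlim : Filter.Tendsto
      (fun d : ℕ => (4 * k) * ((d : ℝ) ^ 2 * Real.exp (-(k⁻¹ ^ 2 / 2) * d))) Filter.atTop
      (nhds ((4 * k) * 0)) := by
    refine .const_mul _ (.comp (g := fun x : ℝ => x ^ 2 * Real.exp (-(k⁻¹ ^ 2 / 2) * x)) ?_
      tendsto_natCast_atTop_atTop)
    simpa only [Real.rpow_two] using
      tendsto_rpow_mul_exp_neg_mul_atTop_nhds_zero 2 (k⁻¹ ^ 2 / 2) (by positivity)
  rw [mul_zero] at hlim
  filter_upwards [hlim.eventually (eventually_le_nhds one_pos)] with d hd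
  exact le_of_eq_of_le (by ring_nf) hd

end Coloring

section Main

theorem IsBijumbled.containsSpanningCrown {n k m d : ℕ} {G : SimpleGraph (Fin n)}
    [DecidableRel G.Adj] {p β : ℝ} (h : IsBijumbled G p β) (hβ : 0 < β)
    (hG : G.IsRegularOfDegree d) (hdβ : 90 * β ≤ d)
    (hd : 4 * (3 * Real.exp (-(3⁻¹ ^ 2 * d / 2)) * d ^ 2) ≤ 1) (hmβ : β < p * m)
    (hm2 : p * m ≤ 2 * β) (hm : 100 * m ≤ n) (hmk : 19 * m ≤ k) (hk : 2 * k ≤ n) :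
    ContainsSpanningCrown n G k := by
  have hd0 : 0 < d := by
    have : (0 : ℝ) < d := by linarith
    exact_mod_cast this
  have hp : 0 < p := pos_of_mul_pos_left (hβ.trans hmβ) (Nat.cast_nonneg m)
  obtain ⟨w, hw⟩ := exists_coloring_lt_card_filter (κ := Fin 3) hG hd0 (by simpa using hd)
  obtain ⟨i, hi⟩ := Fintype.exists_card_fiber_le_of_card_le_nsmul w (b := (n / 3 : ℝ))
    (by rw [Fintype.card_fin, Fintype.card_fin, nsmul_eq_mul]; push_cast; linarith)
  obtain ⟨j, hji⟩ := exists_ne i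
  have expand : ∀ {D : ℕ}, D ≤ 3 → ∀ {T : Finset (Fin n)} (c : Fin 3), (∀ u, w u = c → u ∈ T) →
      ∀ U : Finset (Fin n), #U ≤ 2 * m → D * #U ≤ #(nbhd G U ∩ T) := by
    intro D hD T c hc U hU
    refine h.mul_card_le_card_nbhd_inter hβ ?_ fun u _ => ?_
    · have : (#U : ℝ) ≤ 2 * m := by exact_mod_cast hU
      linarith [mul_le_mul_of_nonneg_left this hp.le]
    · calc 5 * D * β ≤ 5 * 3 * β := by gcongr; exact_mod_cast hD
        _ ≤ (Fintype.card (Fin 3) : ℝ)⁻¹ / 2 * d := by rw [Fintype.card_fin]; push_cast; linarith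
        _ ≤ #{x ∈ G.neighborFinset u | w x = c} := (hw u c).le
        _ ≤ #(G.neighborFinset u ∩ T) := by
          rw [← filter_mem_eq_inter]
          gcongr with x
          exact hc x
  refine (h.isJoined hβ.le hmβ).containsSpanningCrown (Y := {u | w u = i}) ?_ (fun U hU => ?_)
    (fun U hU => ?_) hm hmk hk
  · have : (3 : ℝ) * #{u | w u = i} ≤ n := by linarith
    exact_mod_cast this
  · simpa using expand (D := 1) (by omega) i (by simp) U hU
  · rw [sdiff_eq_inter_compl]
    exact expand le_rfl j (by simp +contextual [hji]) U hU

theorem exists_lt_mul_le_two_mul {p β : ℝ} (hp : 0 < p) (hpβ : p ≤ β) :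
    ∃ m : ℕ, β < p * m ∧ p * m ≤ 2 * β := by
  refine ⟨⌊β / p⌋₊ + 1, ?_, ?_⟩ <;> push_cast
  · rw [mul_comm, ← div_lt_iff₀ hp]
    exact Nat.lt_floor_add_one _
  · have := (le_div_iff₀' hp).1 (Nat.floor_le (div_nonneg (hp.le.trans hpβ) hp.le))
    linarith

variable {n d : ℕ} {lam : ℝ} {G : SimpleGraph (Fin n)}

theorem IsNDLGraph.pos (h : IsNDLGraph n G d lam) : 0 < n :=
  let ⟨_, _, i₀, _⟩ := h
  i₀.pos

theorem IsNDLGraph.le_mul (h : IsNDLGraph n G d lam) (hlam : 0 ≤ lam) (hd : lam < d) :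
    d ≤ lam * n :=
  (div_le_iff₀ (Nat.cast_pos.2 h.pos)).1 ((h.isBijumbled hlam hd).density_le ⟨0, h.pos⟩)

theorem IsNDLGraph.one_le_two_mul (h : IsNDLGraph n G d lam) (hlam : 0 ≤ lam) (hd : lam < d) :
    1 ≤ 2 * lam := by
  have hdeg : 0 < G.degree ⟨0, h.pos⟩ := by
    rw [h.1 ⟨0, h.pos⟩]
    exact_mod_cast hlam.trans_lt hd
  obtain ⟨w, hw⟩ := (G.degree_pos_iff_exists_adj _).1 hdeg
  have hG := h.isBijumbled hlam hd
  linarith [hG.one_le_of_adj hw, hG.density_le w]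

theorem IsNDLGraph.containsSpanningCrown (h : IsNDLGraph n G d lam) (hlam : 0 < lam)
    (hdlam : 200 * lam ≤ d) (hd : 4 * (3 * Real.exp (-(3⁻¹ ^ 2 * d / 2)) * d ^ 2) ≤ 1) {k : ℕ}
    (hlamk : 38 * (lam * n) ≤ k * d) (hk : 2 * k ≤ n) : ContainsSpanningCrown n G k := by
  have hd0 : (0 : ℝ) < d := by linarith
  have hn0 : (0 : ℝ) < n := Nat.cast_pos.2 h.pos
  have hG := h.isBijumbled hlam.le (by linarith)
  obtain ⟨m, hm, hm2⟩ := exists_lt_mul_le_two_mul (div_pos hd0 hn0) (hG.density_le ⟨0, h.pos⟩)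
  have hmd : m * d ≤ 2 * (lam * n) := by
    rw [div_mul_eq_mul_div, div_le_iff₀ hn0] at hm2
    linarith
  have hmn : (100 * m : ℝ) ≤ n := by
    refine le_of_mul_le_mul_right ?_ hd0
    linarith [mul_le_mul_of_nonneg_right hdlam hn0.le]
  have hmk : (19 * m : ℝ) ≤ k := by
    refine le_of_mul_le_mul_right ?_ hd0
    linarith
  exact hG.containsSpanningCrown hlam h.1 (by linarith) hd hm hm2 (by exact_mod_cast hmn)
    (by exact_mod_cast hmk) hk

end Main

/-- For every `ε` with `0 < ε ≤ 1/2` there is `C > 0` such that every `(n,d,λ)`-graph with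
`λ > 0` and `d/λ ≥ C` contains a crown on `n` vertices with `⌊εn⌋` spikes. -/
theorem crown_with_epsilon_spikes (ε : ℝ) (hε0 : 0 < ε) (hε : ε ≤ 1 / 2) :
    ∃ C : ℝ, 0 < C ∧
      ∀ (n d : ℕ) (lam : ℝ) (G : SimpleGraph (Fin n)),
        IsNDLGraph n G d lam → 0 < lam → (d : ℝ) / lam ≥ C →
        ContainsSpanningCrown n G ⌊ε * (n : ℝ)⌋₊ := by
  obtain ⟨d₀, hd₀⟩ := Filter.eventually_atTop.1
    (eventually_four_mul_exp_mul_sq_le_one (zero_lt_three (α := ℝ)))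
  refine ⟨200 + 2 * d₀ + 39 / ε, by positivity, fun n d lam G h hlam hC => ?_⟩
  rw [ge_iff_le, le_div_iff₀ hlam, add_mul, add_mul] at hC
  have hlamε : 0 < 39 / ε * lam := by positivity
  have hd₀lam : 0 ≤ 2 * d₀ * lam := by positivity
  have hdlam : 200 * lam ≤ d := by linarith
  have hd₀d : (d₀ : ℝ) ≤ d := by
    linarith [mul_le_mul_of_nonneg_left (h.one_le_two_mul hlam.le (by linarith)) d₀.cast_nonneg]
  have hεd : 39 * lam ≤ ε * d := by
    rw [← div_le_iff₀' hε0, mul_div_right_comm]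
    linarith
  refine h.containsSpanningCrown hlam hdlam (hd₀ d (by exact_mod_cast hd₀d)) ?_ ?_
  · linarith [h.le_mul hlam.le (by linarith), mul_le_mul_of_nonneg_right hεd n.cast_nonneg,
      mul_le_mul_of_nonneg_right (Nat.lt_floor_add_one (ε * n)).le d.cast_nonneg]
  · have : (2 * ⌊ε * n⌋₊ : ℝ) ≤ n := by
      linarith [Nat.floor_le (a := ε * n) (by positivity),
        mul_le_mul_of_nonneg_right hε n.cast_nonneg]
    exact_mod_cast this
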